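/- arXiv:2602.22838 — 5 statements merged into one kernel-verified Lean document; each statement's English description precedes it below -/
import Mathlib

section
/- Let F_s be a positional scoring rule that is neither Plurality nor Borda Count, and let n ≥ 4 be divisible by 4. Then either Φ(F_s) > Φ(Borda) or Φ(F_s) ≥ Φ(Plur). Furthermore, if additionally n ≥ max(8, 2/s_2 + 4), then either Φ(F_s) > Φ(Borda) or Φ(F_s) > Φ(Plur). -/
open Finset

/-- A strict linear preference order over `m` candidates, encoded as the permutation sending
each candidate to its rank; rank `0` is the most preferred position, so
`c ≻ c'` iff `p c < p c'`. -/
abbrev Pref (m : ℕ) := Equiv.Perm (Fin m)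

/-- A profile of `N` voters, each with a strict preference over `m` candidates. -/
abbrev Profile (m N : ℕ) := Fin N → Pref m

/-- A social choice correspondence: for each number `N` of voters, it maps each `N`-voter
profile to a set of (tied) winners. -/
abbrev SCC (m : ℕ) := (N : ℕ) → Profile m N → Finset (Fin m)

/-- The profile `P` with `k` extra copies of voter `i`'s preference appended. -/
def addCopies {m n : ℕ} (P : Profile m n) (i : Fin n) (k : ℕ) : Profile m (n + k) :=
  fun j => if h : (j : ℕ) < n then P ⟨j, h⟩ else P i

/-- Break a tie among the candidates in `A` using the linear tie-breaking order `τ`: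
the winner is the `τ`-maximal (lowest `τ`-rank) element of `A`. -/
noncomputable def tiebreak {m : ℕ} [NeZero m] (τ : Pref m) (A : Finset (Fin m)) : Fin m :=
  if h : A.Nonempty then τ.symm ((A.image (fun c => τ c)).min' (h.image _)) else 0

/-- `F` is `k`-augmentation strategyproof on `n`-voter profiles: for every tie-breaker `τ`,
profile `P`, voter `i`, and alternative preference `q`, voter `i` weakly prefers the outcome
obtained by adding `k` truthful copies of her vote to the outcome of the manipulation `q`. -/
def kASP (m n : ℕ) [NeZero m] (F : SCC m) (k : ℕ) : Prop :=
  ∀ (τ : Pref m) (P : Profile m n) (i : Fin n) (q : Pref m),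
    (P i) (tiebreak τ (F (n + k) (addCopies P i k))) ≤
      (P i) (tiebreak τ (F n (Function.update P i q)))

/-- The manipulation potential of `F` on `n`-voter profiles: the least `k` such that `F` is
`k'`-augmentation strategyproof for all `k' ≥ k`, and `⊤` (i.e. `∞`) if no such `k` exists. -/
noncomputable def manipPot (m n : ℕ) [NeZero m] (F : SCC m) : ℕ∞ :=
  sInf ((fun k : ℕ => (k : ℕ∞)) '' {k : ℕ | ∀ k' : ℕ, k ≤ k' → kASP m n F k'})

/-- Total score of candidate `c` under the (1-indexed) scoring vector `s`:
a voter ranking `c` in position `ℓ ∈ {1, …, m}` contributes `s ℓ` points. -/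
noncomputable def posScore {m N : ℕ} (s : ℕ → ℝ) (P : Profile m N) (c : Fin m) : ℝ :=
  ∑ i : Fin N, s ((P i c : ℕ) + 1)

/-- The positional scoring rule with scoring vector `s`: candidates with maximal score win. -/
noncomputable def posRule (m : ℕ) (s : ℕ → ℝ) : SCC m := fun _ P =>
  Finset.univ.filter (fun c => ∀ c', posScore s P c' ≤ posScore s P c)

/-!
Let `j` be the first position with `s_j - s_{j+1} < 1/(m-1)`; it exists, since otherwise all
`m - 1` drops, which add up to `1`, would be equal and the rule would be Borda Count. Let the
manipulator rank `a` in position `j` and `b` in position `j + 1`; then `k + 1 ≤ m - 1` truthful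
ballots favour `a` over `b` by less than one point. The other voters put `a` and `b` on top and
rank the remaining candidates in the reverse of the manipulator's order; since the drops before
position `j` are at least `1/(m-1)`, this keeps these candidates out of the race. It remains to let
`b` win even after `k` extra truthful ballots, while `a` wins if the manipulator raises `a` to the
top and buries `b` at the bottom. With `n = 2h + 2`, a tie among `2h` of the voters, broken by one
more who ranks `b` first and `a` last, does this when `1 ≤ (h + 2)(1 - s_2)`. When `s_2` is closer
to `1`, all the other voters keep `a` and `b` in the first two positions, and those who prefer `b`
outnumber those who prefer `a` by `h + 2`, which is possible because `h` is odd.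
-/

/-! ### Winners under positional scoring rules -/

/-- The points that a voter with preference `p` gives to the candidate `c`: the scoring vector is
indexed from `1`, whereas ranks start at `0`. -/
def points {m : ℕ} (s : ℕ → ℝ) (p : Pref m) (c : Fin m) : ℝ :=
  s ((p c : ℕ) + 1)

section Scores

variable {m M N : ℕ} {s : ℕ → ℝ}

lemma posScore_cons (p : Pref m) (P : Profile m N) (c : Fin m) :
    posScore s (Fin.cons p P : Profile m (N + 1)) c = points s p c + posScore s P c := by
  simp only [posScore, points, Fin.sum_univ_succ, Fin.cons_zero, Fin.cons_succ]

lemma posScore_append (P : Profile m M) (Q : Profile m N) (c : Fin m) :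
    posScore s (Fin.append P Q) c = posScore s P c + posScore s Q c := by
  simp only [posScore, Fin.sum_univ_add, Fin.append_left, Fin.append_right]

lemma posScore_const (p : Pref m) (c : Fin m) :
    posScore s (fun _ : Fin N => p) c = N * points s p c := by
  simp only [posScore, points, sum_const, card_univ, Fintype.card_fin, nsmul_eq_mul]

lemma posScore_addCopies (P : Profile m N) (i : Fin N) (k : ℕ) (c : Fin m) :
    posScore s (addCopies P i k) c = posScore s P c + k * points s (P i) c := by
  simp [posScore, points, addCopies, Fin.sum_univ_add]

variable [NeZero m]

lemma tiebreak_eq_of_forall_le (τ : Pref m) {A : Finset (Fin m)} {x : Fin m} (hx : x ∈ A)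
    (hmin : ∀ c ∈ A, τ x ≤ τ c) : tiebreak τ A = x := by
  rw [tiebreak, dif_pos ⟨x, hx⟩, Equiv.symm_apply_eq]
  exact (min'_le _ _ (mem_image_of_mem _ hx)).antisymm (le_min' _ _ _ (by simpa using hmin))

lemma tiebreak_posRule_eq (τ : Pref m) {P : Profile m N} {x : Fin m}
    (hbeats : ∀ c ≠ x, posScore s P c < posScore s P x ∨
      posScore s P c ≤ posScore s P x ∧ τ x ≤ τ c) :
    tiebreak τ (posRule m s N P) = x := by
  refine tiebreak_eq_of_forall_le τ ?_ fun c hc => ?_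
  · refine mem_filter.2 ⟨mem_univ x, fun c => ?_⟩
    obtain rfl | hcx := eq_or_ne c x
    · exact le_rfl
    · exact (hbeats c hcx).elim le_of_lt And.left
  · obtain rfl | hcx := eq_or_ne c x
    · exact le_rfl
    · exact ((hbeats c hcx).resolve_left ((mem_filter.1 hc).2 x).not_gt).2

lemma not_kASP_posRule_of_winners {k : ℕ} (P : Profile m N) (p q τ : Pref m) {a b : Fin m}
    (hab : p a < p b)
    (htruth : ∀ c ≠ b,
      posScore s P c + (k + 1) * points s p c < posScore s P b + (k + 1) * points s p b ∨
      posScore s P c + (k + 1) * points s p c ≤ posScore s P b + (k + 1) * points s p b ∧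
        τ b ≤ τ c)
    (hmanip : ∀ c ≠ a,
      posScore s P c + points s q c < posScore s P a + points s q a ∨
      posScore s P c + points s q c ≤ posScore s P a + points s q a ∧ τ a ≤ τ c) :
    ¬ kASP m (N + 1) (posRule m s) k := by
  intro hASP
  have hb : tiebreak τ (posRule m s _ (addCopies (Fin.cons p P : Profile m (N + 1)) 0 k)) = b := by
    have hscore (c : Fin m) : posScore s (addCopies (Fin.cons p P : Profile m (N + 1)) 0 k) c =
        posScore s P c + (k + 1) * points s p c := by
      rw [posScore_addCopies, posScore_cons, Fin.cons_zero]
      ring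
    exact tiebreak_posRule_eq τ (by simpa only [hscore] using htruth)
  have ha : tiebreak τ (posRule m s _ (Fin.cons q P : Profile m (N + 1))) = a :=
    tiebreak_posRule_eq τ (by simpa only [posScore_cons, add_comm] using hmanip)
  have hle := hASP τ (Fin.cons p P) 0 q
  rw [Fin.update_cons_zero, hb, ha, Fin.cons_zero] at hle
  exact hab.not_ge hle

lemma lt_manipPot_of_not_kASP {F : SCC m} {k : ℕ} (h : ¬ kASP m N F k) :
    (k : ℕ∞) < manipPot m N F := by
  refine (Nat.cast_lt.2 k.lt_succ_self).trans_le (le_sInf ?_)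
  rintro _ ⟨K, hK, rfl⟩
  exact Nat.cast_le.2 (not_le.1 fun hKk => h (hK k hKk))

end Scores

/-! ### Raising and burying candidates -/

namespace Pref

variable {m : ℕ}

/-- The preference `p` with the candidate `c` moved to the top. -/
def raise (p : Pref m) (c : Fin m) : Pref m :=
  p.trans (Fin.cycleRange (p c))

/-- The preference `p` with the candidate `c` moved to the bottom, obtained by raising `c` in the
reversed preference. -/
def bury (p : Pref m) (c : Fin m) : Pref m :=
  (raise (p.trans Fin.revPerm) c).trans Fin.revPerm

/-- The preference `p` with `a` moved to the first and `b` to the second position. -/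
def topPair (p : Pref m) (a b : Fin m) : Pref m :=
  raise (raise p b) a

/-- The preference `p` with `a` moved to the top and `b` to the bottom. -/
def topBottom (p : Pref m) (a b : Fin m) : Pref m :=
  raise (bury p b) a

lemma val_raise (p : Pref m) (c d : Fin m) :
    (raise p c d : ℕ) = if d = c then 0 else if p d < p c then (p d : ℕ) + 1 else p d := by
  have : NeZero m := ⟨c.pos.ne'⟩
  split_ifs with hdc hlt
  · simp [raise, hdc]
  · simp [raise, Fin.coe_cycleRange_of_lt hlt]
  · have hgt : p c < p d := lt_of_le_of_ne (not_lt.1 hlt) fun h => hdc (p.injective h.symm)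
    simp [raise, Fin.cycleRange_of_gt hgt]

lemma val_bury (p : Pref m) (c d : Fin m) :
    (bury p c d : ℕ) = if d = c then m - 1 else if p c < p d then (p d : ℕ) - 1 else p d := by
  simp only [bury, Equiv.trans_apply, Fin.revPerm_apply, Fin.val_rev, val_raise, Fin.rev_lt_rev]
  split_ifs <;> omega

lemma val_raise_self (p : Pref m) (c : Fin m) : (raise p c c : ℕ) = 0 := by
  rw [val_raise, if_pos rfl]

lemma val_ne_val (p : Pref m) {c d : Fin m} (hcd : c ≠ d) : (p c : ℕ) ≠ p d :=
  Fin.val_ne_of_ne (p.injective.ne hcd)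

lemma one_le_val_raise (p : Pref m) {c d : Fin m} (hdc : d ≠ c) : 1 ≤ (raise p c d : ℕ) :=
  Nat.one_le_iff_ne_zero.2 (val_raise_self p c ▸ val_ne_val (raise p c) hdc)

variable {p : Pref m} {a b c : Fin m}

lemma val_topPair_left : (topPair p a b a : ℕ) = 0 :=
  val_raise_self _ a

lemma val_topPair_right (hab : a ≠ b) : (topPair p a b b : ℕ) = 1 := by
  grind [topPair, val_raise, one_le_val_raise]

lemma val_topBottom_left : (topBottom p a b a : ℕ) = 0 :=
  val_raise_self _ a

lemma val_topBottom_right (hab : a ≠ b) : (topBottom p a b b : ℕ) + 1 = m := by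
  grind [topBottom, val_raise, val_bury]

lemma one_le_val_topBottom (hca : c ≠ a) : 1 ≤ (topBottom p a b c : ℕ) :=
  one_le_val_raise _ hca

lemma topPair_swap (hca : c ≠ a) (hcb : c ≠ b) : topPair p b a c = topPair p a b c := by
  apply Fin.ext
  grind [topPair, val_raise, val_ne_val]

lemma topBottom_swap (hca : c ≠ a) (hcb : c ≠ b) : topBottom p b a c = topBottom p a b c := by
  apply Fin.ext
  grind [topBottom, val_raise, val_bury, val_ne_val]

lemma val_topPair_eq_val_topBottom_add_one (hab : a ≠ b) (hca : c ≠ a) (hcb : c ≠ b) :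
    (topPair p a b c : ℕ) = topBottom p a b c + 1 := by
  have := val_ne_val p hab
  have := val_ne_val p hca
  have := val_ne_val p hcb
  grind [topPair, topBottom, val_raise, val_bury]

lemma topPair_of_lt (hac : p a < p c) (hbc : p b < p c) : topPair p a b c = p c := by
  apply Fin.ext
  grind [topPair, val_raise]

lemma topPair_left_le : topPair p a b a ≤ topPair p a b c :=
  Fin.le_def.2 (val_topPair_left.trans_le (Nat.zero_le _))

lemma topPair_right_le (hab : a ≠ b) (hca : c ≠ a) : topPair p a b b ≤ topPair p a b c :=
  Fin.le_def.2 ((val_topPair_right hab).trans_le (one_le_val_raise _ hca))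

end Pref

/-! ### Scoring vectors -/

/-- The normalised non-increasing scoring vectors `(s_1, …, s_m)` that define the monotonic
positional scoring rules on `m` candidates; the values of `s` outside `{1, …, m}` are irrelevant. -/
structure IsScoringVector (m : ℕ) (s : ℕ → ℝ) : Prop where
  one_lt : 1 < m
  map_one : s 1 = 1
  map_last : s m = 0
  antitoneOn : AntitoneOn s (Set.Icc 1 m)

/-- The position `j` is the first one whose score exceeds the next score by less than
`1 / (m - 1)`, the gap between consecutive scores of Borda Count. -/
structure IsFirstSmallDrop (m : ℕ) (s : ℕ → ℝ) (j : ℕ) : Prop where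
  one_le : 1 ≤ j
  lt : j < m
  drop_lt : s j - s (j + 1) < 1 / ((m : ℝ) - 1)
  le_drop : ∀ i, 1 ≤ i → i < j → 1 / ((m : ℝ) - 1) ≤ s i - s (i + 1)

lemma mul_le_sub_of_forall_le_drop {s : ℕ → ℝ} {δ : ℝ} {i j : ℕ} (hij : i ≤ j)
    (hdrop : ∀ x, i ≤ x → x < j → δ ≤ s x - s (x + 1)) : ((j : ℝ) - i) * δ ≤ s i - s j := by
  induction j, hij using Nat.le_induction with
  | base => simp
  | succ j hij ih =>
    have hinit := ih fun x hix hxj => hdrop x hix (hxj.trans j.lt_succ_self)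
    have hlast := hdrop j hij j.lt_succ_self
    push_cast
    linarith

namespace IsScoringVector

variable {m : ℕ} {s : ℕ → ℝ}

lemma le_of_le (hs : IsScoringVector m s) {i j : ℕ} (hi : 1 ≤ i) (hij : i ≤ j) (hj : j ≤ m) :
    s j ≤ s i :=
  hs.antitoneOn ⟨hi, hij.trans hj⟩ ⟨hi.trans hij, hj⟩ hij

lemma nonneg (hs : IsScoringVector m s) {i : ℕ} (hi : 1 ≤ i) (him : i ≤ m) : 0 ≤ s i :=
  hs.map_last ▸ hs.le_of_le hi him le_rfl

lemma le_one (hs : IsScoringVector m s) {i : ℕ} (hi : 1 ≤ i) (him : i ≤ m) : s i ≤ 1 :=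
  hs.map_one ▸ hs.le_of_le le_rfl hi him

lemma two_pos (hs : IsScoringVector m s)
    (hnotplur : ¬ ∀ j : ℕ, 1 ≤ j → j ≤ m → s j = if j = 1 then 1 else 0) : 0 < s 2 := by
  by_contra! htwo
  refine hnotplur fun j hj hjm => ?_
  split_ifs with hj1
  · rw [hj1, hs.map_one]
  · exact ((hs.le_of_le one_le_two (by omega) hjm).trans htwo).antisymm (hs.nonneg hj hjm)

lemma mul_one_div (hs : IsScoringVector m s) : ((m : ℝ) - 1) * (1 / ((m : ℝ) - 1)) = 1 := by
  have hm : (1 : ℝ) < m := Nat.one_lt_cast.2 hs.one_lt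
  exact mul_one_div_cancel (sub_pos.2 hm).ne'

lemma eq_borda_of_forall_le_drop (hs : IsScoringVector m s)
    (hdrop : ∀ i, 1 ≤ i → i < m → 1 / ((m : ℝ) - 1) ≤ s i - s (i + 1)) {j : ℕ} (hj : 1 ≤ j)
    (hjm : j ≤ m) : s j = ((m : ℝ) - j) / ((m : ℝ) - 1) := by
  have habove := mul_le_sub_of_forall_le_drop hj fun i hi hij => hdrop i hi (hij.trans_le hjm)
  have hbelow := mul_le_sub_of_forall_le_drop hjm fun i hji him => hdrop i (hj.trans hji) him
  have hunit := hs.mul_one_div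
  rw [hs.map_one, Nat.cast_one] at habove
  rw [hs.map_last] at hbelow
  rw [div_eq_mul_one_div]
  linarith

lemma exists_isFirstSmallDrop (hs : IsScoringVector m s)
    (hnotborda : ¬ ∀ j : ℕ, 1 ≤ j → j ≤ m → s j = ((m : ℝ) - j) / ((m : ℝ) - 1)) :
    ∃ j, IsFirstSmallDrop m s j := by
  classical
  have hex : ∃ j, 1 ≤ j ∧ j < m ∧ s j - s (j + 1) < 1 / ((m : ℝ) - 1) := by
    by_contra! hdrop
    exact hnotborda fun j hj hjm => hs.eq_borda_of_forall_le_drop hdrop hj hjm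
  obtain ⟨hj, hjm, hlt⟩ := Nat.find_spec hex
  refine ⟨Nat.find hex, hj, hjm, hlt, fun i hi hij => ?_⟩
  exact not_lt.1 fun hi_lt => Nat.find_min hex hij ⟨hi, hij.trans hjm, hi_lt⟩

variable {j l : ℕ} {h t : ℝ}

lemma score_bound_of_first (hs : IsScoringVector m s) (hj : 1 < j) (hjm : j < m) (hh : 1 ≤ h)
    (ht : t ≤ h + 1 + (h - 1) * s 2) :
    t * (s 1 - s (j + 1)) + s (m - 1) + 2 * h * s m ≤ 1 + h * (1 + s 2) := by
  have hnext : 0 ≤ s (j + 1) := hs.nonneg (by omega) hjm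
  have hnext_one : s (j + 1) ≤ 1 := hs.le_one (by omega) hjm
  have htwo : 0 ≤ s 2 := hs.nonneg one_le_two (by omega)
  have hlast : s (m - 1) ≤ s 2 := hs.le_of_le one_le_two (by omega) (by omega)
  have hcoef : 0 ≤ h + 1 + (h - 1) * s 2 := by nlinarith
  have hlead : t * (1 - s (j + 1)) ≤ h + 1 + (h - 1) * s 2 :=
    calc t * (1 - s (j + 1))
        ≤ (h + 1 + (h - 1) * s 2) * (1 - s (j + 1)) :=
          mul_le_mul_of_nonneg_right ht (sub_nonneg.2 hnext_one)
      _ ≤ h + 1 + (h - 1) * s 2 := mul_le_of_le_one_right hcoef (by linarith)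
  rw [hs.map_one, hs.map_last]
  linarith

lemma score_bound_of_le (hs : IsScoringVector m s) (hl : 2 ≤ l) (hlj : l < j)
    (hjl : j ≤ m - l) (hh : 1 ≤ h) (ht : t ≤ h + 1 + (h - 1) * s 2) :
    t * (s l - s (j + 1)) + s (m - l) + 2 * h * s (m + 1 - l) ≤ 1 + h * (1 + s 2) := by
  have htwo : s 2 ≤ 1 := hs.le_one one_le_two (by omega)
  have hl_two : s l ≤ s 2 := hs.le_of_le one_le_two hl (by omega)
  have hnext : s (j + 1) ≤ s l := hs.le_of_le (by omega) (by omega) (by omega)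
  have hrev : s (m + 1 - l) ≤ s (j + 1) := hs.le_of_le (by omega) (by omega) (by omega)
  have hrev' : s (m - l) ≤ s 2 := hs.le_of_le one_le_two (by omega) (by omega)
  have ht_two : t ≤ 2 * h := by nlinarith
  calc t * (s l - s (j + 1)) + s (m - l) + 2 * h * s (m + 1 - l)
      ≤ 2 * h * (s l - s (j + 1)) + s 2 + 2 * h * s (j + 1) := by gcongr
    _ = 2 * h * s l + s 2 := by ring
    _ ≤ 2 * h * s 2 + s 2 := by gcongr
    _ ≤ 1 + h * (1 + s 2) := by nlinarith

end IsScoringVector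

namespace IsFirstSmallDrop

variable {m j l : ℕ} {s : ℕ → ℝ} {h t : ℝ}

lemma mul_le_sub (hj : IsFirstSmallDrop m s j) {i i' : ℕ} (hi : 1 ≤ i) (hii' : i ≤ i')
    (hi'j : i' ≤ j) : ((i' : ℝ) - i) * (1 / ((m : ℝ) - 1)) ≤ s i - s i' :=
  mul_le_sub_of_forall_le_drop hii' fun x hix hxi' =>
    hj.le_drop x (hi.trans hix) (hxi'.trans_le hi'j)

lemma drop_nonneg (hj : IsFirstSmallDrop m s j) (hs : IsScoringVector m s) :
    0 ≤ s j - s (j + 1) :=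
  sub_nonneg.2 (hs.le_of_le hj.one_le j.le_succ hj.lt)

lemma drop_le_one_sub (hj : IsFirstSmallDrop m s j) (hs : IsScoringVector m s) :
    s j - s (j + 1) ≤ 1 - s 2 := by
  rw [← hs.map_one]
  obtain rfl | hj1 := hj.one_le.eq_or_lt
  · exact le_rfl
  · exact hj.drop_lt.le.trans (hj.le_drop 1 le_rfl hj1)

lemma mul_drop_lt_one (hj : IsFirstSmallDrop m s j) (hs : IsScoringVector m s)
    (ht : t ≤ m - 1) : t * (s j - s (j + 1)) < 1 := by
  have hm : (0 : ℝ) < m - 1 := sub_pos.2 (Nat.one_lt_cast.2 hs.one_lt)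
  calc t * (s j - s (j + 1))
      ≤ (m - 1) * (s j - s (j + 1)) := mul_le_mul_of_nonneg_right ht (hj.drop_nonneg hs)
    _ < (m - 1) * (1 / (m - 1)) := mul_lt_mul_of_pos_left hj.drop_lt hm
    _ = 1 := hs.mul_one_div

lemma score_bound_of_lt (hj : IsFirstSmallDrop m s j) (hs : IsScoringVector m s)
    (hl : 2 ≤ l) (hlj : l < j) (hjl : m - l < j) (hh : 1 ≤ h) (ht : 2 * t ≤ 3 * h + 1) :
    t * (s l - s (j + 1)) + s (m - l) + 2 * h * s (m + 1 - l) ≤ 1 + h * (1 + s 2) := by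
  have hjm := hj.lt
  have hunit := hs.mul_one_div
  have hδ : 0 < 1 / ((m : ℝ) - 1) := one_div_pos.2 (sub_pos.2 (Nat.one_lt_cast.2 hs.one_lt))
  have hl_gap := hj.mul_le_sub le_rfl (show 1 ≤ l by omega) hlj.le
  have hrev_gap_two := hj.mul_le_sub one_le_two (show 2 ≤ m + 1 - l by omega) (by omega)
  have hrev_gap_one := hj.mul_le_sub le_rfl (show 1 ≤ m + 1 - l by omega) (by omega)
  have hrev_gap' := hj.mul_le_sub le_rfl (show 1 ≤ m - l by omega) hjl.le
  rw [Nat.cast_sub (by omega)] at hrev_gap_two hrev_gap_one hrev_gap'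
  rw [hs.map_one] at hl_gap hrev_gap_one hrev_gap'
  have hlm : (l : ℝ) + 2 ≤ m := by exact_mod_cast (show l + 2 ≤ m by omega)
  have hδ_le := mul_le_mul_of_nonneg_right hlm hδ.le
  push_cast at hl_gap hrev_gap_two hrev_gap_one hrev_gap'
  set δ : ℝ := 1 / ((m : ℝ) - 1)
  -- The Borda score of position `l + 1`.
  obtain ⟨w, hw⟩ : ∃ w, w = 1 - l * δ := ⟨_, rfl⟩
  have hδw : δ ≤ w := by linarith
  have hlead : t * (s l - s (j + 1)) ≤ (3 * h + 1) / 2 * (w + δ) := by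
    have hnext : 0 ≤ s (j + 1) := hs.nonneg (by omega) hjm
    have hnext_le : s (j + 1) ≤ s l := hs.le_of_le (by omega) (by omega) hjm
    calc t * (s l - s (j + 1))
        ≤ (3 * h + 1) / 2 * (s l - s (j + 1)) :=
          mul_le_mul_of_nonneg_right (by linarith) (by linarith)
      _ ≤ (3 * h + 1) / 2 * (w + δ) := mul_le_mul_of_nonneg_left (by linarith) (by linarith)
  have hrev : h * (2 * s (m + 1 - l) - s 2) ≤ h * (1 - 2 * w - δ) :=
    mul_le_mul_of_nonneg_left (by linarith) (by linarith)
  have hgain : (h + 1) / 2 * δ ≤ (h + 1) / 2 * w := by gcongr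
  linarith

/-- A candidate in position `l` of the manipulator's ballot takes position `m + 1 - l` in a reversed
ballot with `a` and `b` on top, and position `m - l` if `b` is buried instead. -/
lemma score_bound (hj : IsFirstSmallDrop m s j) (hs : IsScoringVector m s) (hl : 1 ≤ l)
    (hlj : l < j) (hh : 1 ≤ h) (ht : 2 * t ≤ 3 * h + 1) (ht' : t ≤ h + 1 + (h - 1) * s 2) :
    t * (s l - s (j + 1)) + s (m - l) + 2 * h * s (m + 1 - l) ≤ 1 + h * (1 + s 2) := by
  obtain rfl | hl2 := hl.eq_or_lt
  · exact hs.score_bound_of_first hlj hj.lt hh ht'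
  obtain hjl | hjl := le_or_gt j (m - l)
  · exact hs.score_bound_of_le hl2 hlj hjl hh ht'
  · exact hj.score_bound_of_lt hs hl2 hlj hjl hh ht

end IsFirstSmallDrop

/-! ### Points of the other candidates -/

section Points

open Pref

variable {m : ℕ} {s : ℕ → ℝ} {p : Pref m} {a b c : Fin m}

lemma points_topPair_right (hab : a ≠ b) : points s (topPair p a b) b = s 2 := by
  rw [points, val_topPair_right hab]

lemma points_topPair_swap (hca : c ≠ a) (hcb : c ≠ b) :
    points s (topPair p b a) c = points s (topPair p a b) c := by
  rw [points, points, topPair_swap hca hcb]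

lemma points_topBottom_swap (hca : c ≠ a) (hcb : c ≠ b) :
    points s (topBottom p b a) c = points s (topBottom p a b) c := by
  rw [points, points, topBottom_swap hca hcb]

namespace IsScoringVector

lemma points_le_points (hs : IsScoringVector m s) (hab : p a ≤ p b) :
    points s p b ≤ points s p a :=
  hs.le_of_le (Nat.succ_pos _) (Nat.succ_le_succ hab) (Fin.isLt _)

lemma points_topPair_left (hs : IsScoringVector m s) : points s (topPair p a b) a = 1 := by
  rw [points, val_topPair_left, zero_add, hs.map_one]

lemma points_topBottom_left (hs : IsScoringVector m s) : points s (topBottom p a b) a = 1 := by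
  rw [points, val_topBottom_left, zero_add, hs.map_one]

lemma points_topBottom_right (hs : IsScoringVector m s) (hab : a ≠ b) :
    points s (topBottom p a b) b = 0 := by
  rw [points, val_topBottom_right hab, hs.map_last]

lemma points_topBottom_le (hs : IsScoringVector m s) (hca : c ≠ a) :
    points s (topBottom p a b) c ≤ s 2 :=
  hs.le_of_le one_le_two (Nat.succ_le_succ (one_le_val_topBottom hca)) (Fin.isLt _)

lemma points_topPair_le_points_topBottom (hs : IsScoringVector m s) (hab : a ≠ b) (hca : c ≠ a)
    (hcb : c ≠ b) : points s (topPair p a b) c ≤ points s (topBottom p a b) c :=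
  have hval := val_topPair_eq_val_topBottom_add_one (p := p) hab hca hcb
  hs.le_of_le (Nat.succ_pos _) (by omega) (Fin.isLt _)

lemma points_topPair_le (hs : IsScoringVector m s) (hab : a ≠ b) (hca : c ≠ a) (hcb : c ≠ b) :
    points s (topPair p a b) c ≤ s 2 :=
  (hs.points_topPair_le_points_topBottom hab hca hcb).trans (hs.points_topBottom_le hca)

end IsScoringVector

lemma IsFirstSmallDrop.third_party_bound (hj : IsFirstSmallDrop m s (a + 1))
    (hs : IsScoringVector m s) (hab : (b : ℕ) = a + 1) {h t : ℝ} (hca : c ≠ a) (hcb : c ≠ b)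
    (hh : 1 ≤ h) (ht0 : 0 ≤ t) (ht : 2 * t ≤ 3 * h + 1) (ht' : t ≤ h + 1 + (h - 1) * s 2) :
    t * points s 1 c + points s (topBottom Fin.revPerm a b) c +
        2 * h * points s (topPair Fin.revPerm a b) c ≤
      t * points s 1 b + 1 + h * (1 + s 2) := by
  have hne : a ≠ b := by omega
  obtain hlt | hgt := lt_or_gt_of_ne (Fin.val_ne_of_ne hca)
  · have hpair : topPair Fin.revPerm a b c = Fin.revPerm c :=
      topPair_of_lt (Fin.rev_lt_rev.2 hlt) (Fin.rev_lt_rev.2 (Fin.lt_def.2 (by omega)))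
    have hval := val_topPair_eq_val_topBottom_add_one (p := Fin.revPerm) hne hca hcb
    have hbound := hj.score_bound hs (l := c + 1) (by omega) (by omega) hh ht ht'
    rw [hpair, Fin.revPerm_apply, Fin.val_rev] at hval
    have hbottom : points s (topBottom Fin.revPerm a b) c = s (m - (c + 1)) := by
      rw [points, ← hval]
    have htop : points s (topPair Fin.revPerm a b) c = s (m + 1 - (c + 1)) := by
      rw [points, hpair, Fin.revPerm_apply, Fin.val_rev]
      congr 1
      omega
    rw [hbottom, htop]
    simp only [points, Equiv.Perm.one_apply, hab]
    linarith
  · have hle : points s 1 c ≤ points s 1 b := hs.points_le_points (hab.le.trans hgt)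
    have htwo : s 2 ≤ 1 := hs.le_one one_le_two hs.one_lt
    have hbottom : points s (topBottom Fin.revPerm a b) c ≤ s 2 := hs.points_topBottom_le hca
    calc t * points s 1 c + points s (topBottom Fin.revPerm a b) c +
          2 * h * points s (topPair Fin.revPerm a b) c
        ≤ t * points s 1 b + s 2 + 2 * h * s 2 := by
          gcongr
          exact hs.points_topPair_le hne hca hcb
      _ ≤ t * points s 1 b + 1 + h * (1 + s 2) := by nlinarith

end Points

/-! ### The two profiles -/

namespace IsScoringVector

open Pref

variable {m : ℕ} [NeZero m] {s : ℕ → ℝ} {p r : Pref m} {a b : Fin m}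

lemma not_kASP_of_balanced (hs : IsScoringVector m s) (hab : p a < p b) {h k : ℕ}
    (htwo : 1 ≤ ((h : ℝ) + 2) * (1 - s 2))
    (hdrop : ((k : ℝ) + 1) * (points s p a - points s p b) < 1)
    (hthird : ∀ c, c ≠ a → c ≠ b →
      ((k : ℝ) + 1) * points s p c + points s (topBottom r a b) c +
          2 * h * points s (topPair r a b) c ≤
        ((k : ℝ) + 1) * points s p b + 1 + h * (1 + s 2)) :
    ¬ kASP m (h + h + 1 + 1) (posRule m s) k := by
  have hne : a ≠ b := ne_of_apply_ne p hab.ne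
  let P : Profile m (h + h + 1) := Fin.cons (topBottom r b a)
    (Fin.append (fun _ : Fin h => topPair r a b) (fun _ : Fin h => topPair r b a))
  have hP (c : Fin m) : posScore s P c = points s (topBottom r b a) c +
      (h * points s (topPair r a b) c + h * points s (topPair r b a) c) := by
    simp only [P, posScore_cons, posScore_append, posScore_const]
  have hPa : posScore s P a = h * (1 + s 2) := by
    rw [hP, hs.points_topBottom_right hne.symm, hs.points_topPair_left,
      points_topPair_right hne.symm]
    ring
  have hPb : posScore s P b = 1 + h * (1 + s 2) := by
    rw [hP, hs.points_topBottom_left, hs.points_topPair_left, points_topPair_right hne]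
    ring
  have hPc (c : Fin m) (hca : c ≠ a) (hcb : c ≠ b) : posScore s P c =
      points s (topBottom r a b) c + 2 * h * points s (topPair r a b) c := by
    rw [hP, points_topBottom_swap hca hcb, points_topPair_swap hca hcb]
    ring
  refine not_kASP_posRule_of_winners P p (topBottom r a b) (topPair r a b) hab
    (fun c hcb => ?_) (fun c hca => ?_)
  · obtain rfl | hca := eq_or_ne c a
    · exact .inl (by linarith)
    · exact .inr ⟨by linarith [hthird c hca hcb, hPc c hca hcb], topPair_right_le hne hca⟩
  · refine .inr ⟨?_, topPair_left_le⟩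
    rw [hPa, hs.points_topBottom_left]
    obtain rfl | hcb := eq_or_ne c b
    · rw [hPb, hs.points_topBottom_right hne]
      linarith
    · have hbottom : points s (topBottom r a b) c ≤ s 2 := hs.points_topBottom_le hca
      have hpair : h * points s (topPair r a b) c ≤ h * s 2 :=
        mul_le_mul_of_nonneg_left (hs.points_topPair_le hne hca hcb) h.cast_nonneg
      rw [hPc c hca hcb]
      linarith

lemma not_kASP_of_unbalanced (hs : IsScoringVector m s) (hab : p a < p b) {e k : ℕ}
    (htwo : (2 * (e : ℝ) + 3) * (1 - s 2) < 1) (hke : (k : ℝ) + 1 ≤ 2 * e + 3)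
    (hdrop : points s p a - points s p b ≤ 1 - s 2)
    (hthird : ∀ c, c ≠ a → c ≠ b →
      ((k : ℝ) + 1) * points s p c + points s (topBottom r a b) c +
          2 * (2 * e + 1) * points s (topPair r a b) c ≤
        ((k : ℝ) + 1) * points s p b + 1 + (2 * e + 1) * (1 + s 2)) :
    ¬ kASP m (e + (3 * e + 3) + 1) (posRule m s) k := by
  have hne : a ≠ b := ne_of_apply_ne p hab.ne
  have htwo_le : ((e : ℝ) + 1) * s 2 ≤ e + 1 :=
    mul_le_of_le_one_right (by positivity) (hs.le_one one_le_two hs.one_lt)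
  let P : Profile m (e + (3 * e + 3)) :=
    Fin.append (fun _ : Fin e => topPair r a b) (fun _ : Fin (3 * e + 3) => topPair r b a)
  have hP (c : Fin m) : posScore s P c =
      e * points s (topPair r a b) c + (3 * e + 3) * points s (topPair r b a) c := by
    simp only [P, posScore_append, posScore_const]
    push_cast
    rfl
  have hPa : posScore s P a = e + (3 * e + 3) * s 2 := by
    rw [hP, hs.points_topPair_left, points_topPair_right hne.symm, mul_one]
  have hPb : posScore s P b = e * s 2 + (3 * e + 3) := by
    rw [hP, hs.points_topPair_left, points_topPair_right hne, mul_one]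
  have hPc (c : Fin m) (hca : c ≠ a) (hcb : c ≠ b) :
      posScore s P c = (4 * e + 3) * points s (topPair r a b) c := by
    rw [hP, points_topPair_swap hca hcb]
    ring
  refine not_kASP_posRule_of_winners P p (topBottom r a b) (topPair r b a) hab
    (fun c hcb => .inr ⟨?_, topPair_left_le⟩) (fun c hca => ?_)
  · obtain rfl | hca := eq_or_ne c a
    · have hlead := mul_le_mul hke hdrop (sub_nonneg.2 (hs.points_le_points hab.le)) (by positivity)
      linarith
    · have hle : points s (topPair r a b) c ≤ points s (topBottom r a b) c :=
        hs.points_topPair_le_points_topBottom hne hca hcb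
      linarith [hthird c hca hcb, hPc c hca hcb]
  · rw [hPa, hs.points_topBottom_left]
    obtain rfl | hcb := eq_or_ne c b
    · rw [hPb, hs.points_topBottom_right hne]
      exact .inl (by linarith)
    · have hbottom : points s (topBottom r a b) c ≤ s 2 := hs.points_topBottom_le hca
      have hpair : (4 * e + 3) * points s (topPair r a b) c ≤ (4 * e + 3) * s 2 :=
        mul_le_mul_of_nonneg_left (hs.points_topPair_le hne hca hcb) (by positivity)
      exact .inr ⟨by linarith [hPc c hca hcb], topPair_right_le hne.symm hcb⟩

variable {h k : ℕ}

lemma not_kASP_posRule (hs : IsScoringVector m s)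
    (hnotborda : ¬ ∀ j : ℕ, 1 ≤ j → j ≤ m → s j = ((m : ℝ) - j) / ((m : ℝ) - 1))
    (hodd : Odd h) (hkm : k + 1 < m) (hkh : k ≤ h + 1)
    (hk : (k : ℝ) + 1 ≤ h + 1 + (h - 1) * s 2) : ¬ kASP m (2 * h + 2) (posRule m s) k := by
  obtain ⟨j, hj⟩ := hs.exists_isFirstSmallDrop hnotborda
  obtain ⟨i, rfl⟩ := Nat.exists_eq_add_of_le' hj.one_le
  let a : Fin m := ⟨i, i.lt_succ_self.trans hj.lt⟩
  let b : Fin m := ⟨i + 1, hj.lt⟩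
  have hab : (1 : Pref m) a < (1 : Pref m) b := Fin.lt_def.2 i.lt_succ_self
  have hh : (1 : ℝ) ≤ h := Nat.one_le_cast.2 hodd.pos
  have hk' : 2 * ((k : ℝ) + 1) ≤ 3 * h + 1 := by
    obtain ⟨e, rfl⟩ := hodd
    obtain rfl | he := e.eq_zero_or_pos
    · norm_num at hk ⊢
      linarith
    · exact_mod_cast (by omega : 2 * (k + 1) ≤ 3 * (2 * e + 1) + 1)
  have hthird (c : Fin m) (hca : c ≠ a) (hcb : c ≠ b) :=
    hj.third_party_bound hs (a := a) (b := b) rfl hca hcb hh k.cast_add_one_pos.le hk' hk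
  obtain htwo | htwo := le_or_gt 1 (((h : ℝ) + 2) * (1 - s 2))
  · have hkm' : (k : ℝ) + 1 ≤ m - 1 := le_sub_right_of_add_le (by exact_mod_cast hkm)
    rw [two_mul]
    exact hs.not_kASP_of_balanced hab htwo (hj.mul_drop_lt_one hs hkm') hthird
  · obtain ⟨e, rfl⟩ := hodd
    rw [show 2 * (2 * e + 1) + 2 = e + (3 * e + 3) + 1 by ring]
    push_cast at htwo hthird
    exact hs.not_kASP_of_unbalanced hab (by linarith) (by exact_mod_cast (by omega))
      (hj.drop_le_one_sub hs) hthird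

lemma lt_manipPot_posRule (hs : IsScoringVector m s)
    (hnotborda : ¬ ∀ j : ℕ, 1 ≤ j → j ≤ m → s j = ((m : ℝ) - j) / ((m : ℝ) - 1))
    (hodd : Odd h) (hkh : k ≤ h + 1) (hk : (k : ℝ) + 1 ≤ h + 1 + (h - 1) * s 2) :
    ((m - 2 : ℕ) : ℕ∞) < manipPot m (2 * h + 2) (posRule m s) ∨
      (k : ℕ∞) < manipPot m (2 * h + 2) (posRule m s) := by
  have hm := hs.one_lt
  have hmin : ((min (m - 2) k : ℕ) : ℝ) ≤ k := Nat.cast_le.2 (min_le_right _ _)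
  rw [← min_lt_iff, ← (Nat.mono_cast (α := ℕ∞)).map_min]
  exact lt_manipPot_of_not_kASP
    (hs.not_kASP_posRule hnotborda hodd (by omega) (by omega) (by linarith))

end IsScoringVector

/-- Let `F_s` be a positional scoring rule that is neither Plurality
(`s = (1,0,…,0)`) nor Borda Count (`s_j = (m−j)/(m−1)`), and let `n ≥ 4` be divisible
by `4`. Then either `Φ(F_s) > Φ(Borda) = m − 2` or `Φ(F_s) ≥ Φ(Plur) = ⌈(n−1)/2⌉`;
and if additionally `n ≥ max(8, 2/s_2 + 4)`, then either `Φ(F_s) > m − 2` or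
`Φ(F_s) > ⌈(n−1)/2⌉`. -/
theorem posRule_manipPot_vs_borda_plurality (m n : ℕ) [NeZero m] (hm : 3 ≤ m)
    (hn4 : 4 ≤ n) (hdvd : 4 ∣ n)
    (s : ℕ → ℝ) (hs1 : s 1 = 1) (hsm : s m = 0)
    (hmono : ∀ j : ℕ, 1 ≤ j → j < m → s (j + 1) ≤ s j)
    (hnotplur : ¬ ∀ j : ℕ, 1 ≤ j → j ≤ m → s j = if j = 1 then 1 else 0)
    (hnotborda : ¬ ∀ j : ℕ, 1 ≤ j → j ≤ m → s j = ((m : ℝ) - j) / ((m : ℝ) - 1)) :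
    (((m - 2 : ℕ) : ℕ∞) < manipPot m n (posRule m s) ∨
      (((n - 1 + 1) / 2 : ℕ) : ℕ∞) ≤ manipPot m n (posRule m s)) ∧
    (max 8 (2 / s 2 + 4) ≤ (n : ℝ) →
      (((m - 2 : ℕ) : ℕ∞) < manipPot m n (posRule m s) ∨
        (((n - 1 + 1) / 2 : ℕ) : ℕ∞) < manipPot m n (posRule m s))) := by
  have hs : IsScoringVector m s :=
    ⟨by omega, hs1, hsm, antitoneOn_of_succ_le Set.ordConnected_Icc fun j _ hj hj' =>
      hmono j hj.1 hj'.2⟩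
  obtain ⟨h, hodd, rfl⟩ : ∃ h, Odd h ∧ n = 2 * h + 2 :=
    ⟨n / 2 - 1, Nat.odd_iff.2 (by omega), by omega⟩
  have htwo : 0 < s 2 := hs.two_pos hnotplur
  have hh : (1 : ℝ) ≤ h := Nat.one_le_cast.2 hodd.pos
  rw [show (2 * h + 2 - 1 + 1) / 2 = h + 1 by omega]
  refine ⟨?_, fun hn => ?_⟩
  · rw [Nat.cast_succ]
    refine (hs.lt_manipPot_posRule hnotborda hodd h.le_succ ?_).imp_right Order.add_one_le_of_lt
    nlinarith
  · refine hs.lt_manipPot_posRule hnotborda hodd le_rfl ?_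
    have hn' : 2 / s 2 ≤ 2 * h - 2 := by
      have hmax := (le_max_right _ _).trans hn
      push_cast at hmax
      linarith
    rw [div_le_iff₀ htwo] at hn'
    push_cast
    linarith
end

section
/- Assume m ≥ 4 and n is odd. Then for every integer k with 0 ≤ k < n−1, Black's Rule is not k-augmentation strategyproof: there exist a profile with n voters, a voter i, a manipulation, and a tie-breaker under which the manipulation yields a strictly better outcome for voter i than adding k truthful copies of her vote. Since Black's Rule is majority-consistent, its manipulation potential is exactly n−1. -/
open Finset

/-- Borda score of candidate `c`: each voter awards `m - 1 - (rank of c)` points. -/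
def bordaScore {m N : ℕ} (P : Profile m N) (c : Fin m) : ℕ :=
  ∑ i : Fin N, (m - 1 - (P i c : ℕ))

/-- Borda Count: the winners are the candidates with maximal Borda score. -/
def borda (m : ℕ) : SCC m := fun _ P =>
  Finset.univ.filter (fun c => ∀ c', bordaScore P c' ≤ bordaScore P c)

/-- The margin of `c` against `d`: the number of voters preferring `c` to `d` minus the
number of voters preferring `d` to `c`. -/
def margin {m N : ℕ} (P : Profile m N) (c d : Fin m) : ℤ :=
  ((Finset.univ.filter (fun i => P i c < P i d)).card : ℤ) -
    ((Finset.univ.filter (fun i => P i d < P i c)).card : ℤ)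

/-- The set of Condorcet winners (which is empty or a singleton). -/
def condorcetSet {m N : ℕ} (P : Profile m N) : Finset (Fin m) :=
  Finset.univ.filter (fun c => ∀ d : Fin m, d ≠ c → 0 < margin P c d)

/-- Black's rule: the Condorcet winner if one exists, otherwise the Borda winners. -/
def black (m : ℕ) : SCC m := fun N P =>
  if (condorcetSet P).Nonempty then condorcetSet P else borda m N P

/-!
Upper bound: a voter who adds at least `n - 1` copies of her vote is part of a strict majority
ranking her favourite first, so a majority-consistent rule elects it.

Lower bound: Black's Rule ignores candidates whom everybody ranks below all the others, so four
candidates `a, b, c, d` suffice. Take `h` voters with `a ≻ d ≻ b ≻ c`, another `h` with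
`c ≻ a ≻ d ≻ b`, and one manipulator with `b ≻ c ≻ a ≻ d`. This is a Condorcet cycle on `a, b, c`,
with `d` placed directly below `a` by everybody in order to raise the Borda score of `a`. With fewer
than `2 * h` additional copies of the manipulator's vote, `b` does not yet beat `a`, the cycle
survives, and `a` is a Borda winner. If the manipulator instead votes `c ≻ a ≻ d ≻ b`, then `c` is
ranked first by a strict majority.
-/

lemma tiebreak_eq_iff {m : ℕ} [NeZero m] {τ : Pref m} {A : Finset (Fin m)} (hA : A.Nonempty)
    {c : Fin m} : tiebreak τ A = c ↔ c ∈ A ∧ ∀ d ∈ A, τ c ≤ τ d := by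
  simp [tiebreak, hA, Equiv.symm_apply_eq, Finset.min'_eq_iff]

lemma tiebreak_singleton {m : ℕ} [NeZero m] (τ : Pref m) (c : Fin m) : tiebreak τ {c} = c :=
  (tiebreak_eq_iff (singleton_nonempty c)).2 (by simp)

lemma sum_addCopies {M : Type*} [AddCommMonoid M] {m n : ℕ} (f : Pref m → M) (P : Profile m n)
    (i : Fin n) (k : ℕ) : ∑ j, f (addCopies P i k j) = ∑ j, f (P j) + k • f (P i) := by
  simp [Fin.sum_univ_add, addCopies]

lemma manipPot_eq_coe {m n : ℕ} [NeZero m] {F : SCC m} {K : ℕ} (hge : ∀ k, K ≤ k → kASP m n F k)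
    (hlt : ∀ k < K, ¬ kASP m n F k) : manipPot m n F = K := by
  refine IsLeast.csInf_eq ⟨⟨K, hge, rfl⟩, ?_⟩
  rintro _ ⟨k, hk, rfl⟩
  exact Nat.cast_le.2 (not_lt.1 fun hkK => hlt k hkK (hk k le_rfl))

/-- Majority consistency: a candidate whom strictly more than half of the voters rank first is the
unique winner. -/
def MajorityConsistent {m : ℕ} [NeZero m] (F : SCC m) : Prop :=
  ∀ (N : ℕ) (P : Profile m N) (c : Fin m), N < 2 * #{j | P j c = 0} → F N P = {c}

theorem MajorityConsistent.kASP {m n k : ℕ} [NeZero m] {F : SCC m} (hF : MajorityConsistent F)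
    (hk : n - 1 ≤ k) : kASP m n F k := by
  intro τ P i q
  have hcard : #{j | addCopies P i k j ((P i).symm 0) = 0} = #{j | P j ((P i).symm 0) = 0} + k := by
    simp only [card_filter]
    rw [sum_addCopies fun p : Pref m => if p ((P i).symm 0) = 0 then 1 else 0]
    simp
  have hpos : 0 < #{j | P j ((P i).symm 0) = 0} := card_pos.2 ⟨i, by simp⟩
  rw [hF _ _ ((P i).symm 0) (by omega), tiebreak_singleton, Equiv.apply_symm_apply]
  exact Fin.zero_le _

lemma margin_swap {m N : ℕ} (P : Profile m N) (c d : Fin m) : margin P d c = -margin P c d := by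
  simp [margin]

lemma margin_eq_sum_sign {m N : ℕ} (P : Profile m N) (c d : Fin m) :
    margin P c d = ∑ j, Int.sign ((P j d : ℤ) - P j c) := by
  simp only [margin, card_filter, Nat.cast_sum, ← sum_sub_distrib]
  refine sum_congr rfl fun j _ => ?_
  obtain hlt | heq | hgt := lt_trichotomy (P j c) (P j d)
  · rw [Int.sign_eq_one_of_pos (by omega), if_pos hlt, if_neg hlt.asymm]
    rfl
  · simp [heq]
  · rw [Int.sign_eq_neg_one_of_neg (by omega), if_pos hgt, if_neg hgt.asymm]
    rfl

lemma margin_pos_of_majority {m N : ℕ} [NeZero m] {P : Profile m N} {c d : Fin m} (hdc : d ≠ c)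
    (hc : N < 2 * #{j | P j c = 0}) : 0 < margin P c d := by
  have hpro : #{j | P j c = 0} ≤ #{j | P j c < P j d} :=
    card_le_card <| monotone_filter_right _ fun j _ hj => by
      rw [hj, Fin.pos_iff_ne_zero, ← hj]
      exact (P j).injective.ne hdc
  have hcon : #{j | P j d < P j c} ≤ #{j | ¬ P j c = 0} :=
    card_le_card <| monotone_filter_right _ fun _ _ hj =>
      Fin.pos_iff_ne_zero.1 ((Fin.zero_le _).trans_lt hj)
  have htotal := card_filter_add_card_filter_not (s := univ) fun j => P j c = 0
  rw [card_univ, Fintype.card_fin] at htotal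
  unfold margin
  omega

lemma mem_condorcetSet {m N : ℕ} {P : Profile m N} {c : Fin m} :
    c ∈ condorcetSet P ↔ ∀ d, d ≠ c → 0 < margin P c d := by
  simp [condorcetSet]

lemma condorcetSet_eq_singleton {m N : ℕ} {P : Profile m N} {c : Fin m}
    (hc : ∀ d, d ≠ c → 0 < margin P c d) : condorcetSet P = {c} := by
  refine eq_singleton_iff_unique_mem.2 ⟨mem_condorcetSet.2 hc, fun d hd => ?_⟩
  by_contra hdc
  have hdc_pos := mem_condorcetSet.1 hd c (Ne.symm hdc)
  rw [margin_swap] at hdc_pos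
  linarith [hc d hdc]

theorem majorityConsistent_black (m : ℕ) [NeZero m] : MajorityConsistent (black m) := by
  intro N P c hc
  simp [black, condorcetSet_eq_singleton fun _ hdc => margin_pos_of_majority hdc hc]

/-- The total rank of a candidate, in which terms the Borda winners are the candidates of least
total rank. It avoids the truncated subtraction in `bordaScore`. -/
def rankSum {m N : ℕ} (P : Profile m N) (c : Fin m) : ℕ :=
  ∑ j, (P j c : ℕ)

lemma bordaScore_add_rankSum {m N : ℕ} (P : Profile m N) (c : Fin m) :
    bordaScore P c + rankSum P c = N * (m - 1) := by
  have hle (j : Fin N) : (P j c : ℕ) ≤ m - 1 := by omega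
  simp [bordaScore, rankSum, ← sum_add_distrib, Nat.sub_add_cancel (hle _)]

lemma mem_borda {m N : ℕ} {P : Profile m N} {c : Fin m} :
    c ∈ borda m N P ↔ ∀ d, rankSum P c ≤ rankSum P d := by
  simp only [borda, mem_filter, mem_univ, true_and]
  refine forall_congr' fun d => ?_
  have hc := bordaScore_add_rankSum P c
  have hd := bordaScore_add_rankSum P d
  omega

section Pad

variable {s m : ℕ} (hsm : s ≤ m)

/-- Extends a preference over `s` candidates to `m ≥ s` candidates by ranking the new ones below all
the old ones, in increasing order. -/
def Pref.pad (p : Pref s) : Pref m :=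
  p.viaFintypeEmbedding (Fin.castLEEmb hsm)

/-- Pads every preference of a profile by the same candidates at the bottom; it serves to transfer
a manipulation from `s` candidates to `m ≥ s` candidates. -/
def Profile.pad {N : ℕ} (P : Profile s N) : Profile m N :=
  fun j => Pref.pad hsm (P j)

lemma Pref.pad_castLE (p : Pref s) (x : Fin s) :
    Pref.pad hsm p (Fin.castLE hsm x) = Fin.castLE hsm (p x) :=
  p.viaFintypeEmbedding_apply_image (Fin.castLEEmb hsm) x

lemma Pref.pad_castLE_lt (p : Pref s) (x : Fin s) {d : Fin m}
    (hd : d ∉ Set.range (Fin.castLE hsm)) :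
    Pref.pad hsm p (Fin.castLE hsm x) < Pref.pad hsm p d := by
  have hpd : Pref.pad hsm p d = d :=
    p.viaFintypeEmbedding_apply_notMem_range (Fin.castLEEmb hsm) hd
  rw [hpd, Pref.pad_castLE, Fin.lt_def, Fin.val_castLE]
  rw [Fin.range_castLE, Set.mem_ofPred_eq, not_lt] at hd
  exact (p x).isLt.trans_le hd

lemma addCopies_pad {n : ℕ} (P : Profile s n) (i : Fin n) (k : ℕ) :
    addCopies (P.pad hsm) i k = (addCopies P i k).pad hsm := by
  funext j
  simp only [addCopies, Profile.pad, apply_dite (Pref.pad hsm)]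

lemma update_pad {n : ℕ} (P : Profile s n) (i : Fin n) (q : Pref s) :
    Function.update (P.pad hsm) i (Pref.pad hsm q) = Profile.pad hsm (Function.update P i q) :=
  (Function.comp_update (Pref.pad hsm) P i q).symm

lemma margin_pad_castLE {N : ℕ} (P : Profile s N) (x y : Fin s) :
    margin (P.pad hsm) (Fin.castLE hsm x) (Fin.castLE hsm y) = margin P x y := by
  simp only [margin, Profile.pad, Pref.pad_castLE, Fin.castLE_lt_castLE_iff]

lemma margin_pad_pos {N : ℕ} (hN : 0 < N) (P : Profile s N) (x : Fin s) {d : Fin m}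
    (hd : d ∉ Set.range (Fin.castLE hsm)) : 0 < margin (P.pad hsm) (Fin.castLE hsm x) d := by
  have hlt (j : Fin N) := Pref.pad_castLE_lt hsm (P j) x hd
  simpa [margin, Profile.pad, hlt, (hlt _).not_gt] using hN

lemma rankSum_pad_castLE {N : ℕ} (P : Profile s N) (x : Fin s) :
    rankSum (P.pad hsm) (Fin.castLE hsm x) = rankSum P x := by
  simp [rankSum, Profile.pad, Pref.pad_castLE]

lemma rankSum_pad_lt {N : ℕ} (hN : 0 < N) (P : Profile s N) (x : Fin s) {d : Fin m}
    (hd : d ∉ Set.range (Fin.castLE hsm)) :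
    rankSum (P.pad hsm) (Fin.castLE hsm x) < rankSum (P.pad hsm) d :=
  sum_lt_sum_of_nonempty ⟨⟨0, hN⟩, mem_univ _⟩ fun j _ => Pref.pad_castLE_lt hsm (P j) x hd

lemma eq_map_castLEEmb {A : Finset (Fin m)} {B : Finset (Fin s)}
    (hmem : ∀ x, Fin.castLE hsm x ∈ A ↔ x ∈ B) (hnot : ∀ c ∉ Set.range (Fin.castLE hsm), c ∉ A) :
    A = B.map (Fin.castLEEmb hsm) := by
  ext c
  by_cases hc : c ∈ Set.range (Fin.castLE hsm)
  · obtain ⟨x, rfl⟩ := hc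
    rw [hmem]
    exact (mem_map' (Fin.castLEEmb hsm)).symm
  · refine iff_of_false (hnot c hc) fun hcB => hc ?_
    obtain ⟨x, -, hx⟩ := mem_map.1 hcB
    exact ⟨x, hx⟩

lemma condorcetSet_pad [NeZero s] {N : ℕ} (hN : 0 < N) (P : Profile s N) :
    condorcetSet (P.pad hsm) = (condorcetSet P).map (Fin.castLEEmb hsm) := by
  refine eq_map_castLEEmb hsm (fun x => ?_) fun c hc hcond => ?_
  · simp only [mem_condorcetSet]
    refine ⟨fun hx y hyx => ?_, fun hx d hdx => ?_⟩
    · rw [← margin_pad_castLE hsm]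
      exact hx _ ((Fin.castLE_injective hsm).ne hyx)
    · by_cases hd : d ∈ Set.range (Fin.castLE hsm)
      · obtain ⟨y, rfl⟩ := hd
        rw [margin_pad_castLE]
        exact hx y fun hyx => hdx (congrArg _ hyx)
      · exact margin_pad_pos hsm hN P x hd
  · have hlose := margin_pad_pos hsm hN P 0 hc
    have hwin := mem_condorcetSet.1 hcond (Fin.castLE hsm 0) fun h0 => hc ⟨0, h0⟩
    rw [margin_swap] at hwin
    linarith

lemma borda_pad [NeZero s] {N : ℕ} (hN : 0 < N) (P : Profile s N) :
    borda m N (P.pad hsm) = (borda s N P).map (Fin.castLEEmb hsm) := by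
  refine eq_map_castLEEmb hsm (fun x => ?_) fun c hc hborda => ?_
  · simp only [mem_borda, rankSum_pad_castLE]
    refine ⟨fun hx y => rankSum_pad_castLE hsm P y ▸ hx _, fun hx d => ?_⟩
    by_cases hd : d ∈ Set.range (Fin.castLE hsm)
    · obtain ⟨y, rfl⟩ := hd
      exact (hx y).trans_eq (rankSum_pad_castLE hsm P y).symm
    · exact rankSum_pad_castLE hsm P x ▸ (rankSum_pad_lt hsm hN P x hd).le
  · exact (rankSum_pad_lt hsm hN P 0 hc).not_ge (mem_borda.1 hborda _)

lemma black_pad [NeZero s] {N : ℕ} (hN : 0 < N) (P : Profile s N) :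
    black m N (P.pad hsm) = (black s N P).map (Fin.castLEEmb hsm) := by
  simp only [black, condorcetSet_pad hsm hN, borda_pad hsm hN, map_nonempty,
    apply_ite (Finset.map (Fin.castLEEmb hsm))]

lemma tiebreak_pad [NeZero s] [NeZero m] (τ : Pref s) (A : Finset (Fin s)) :
    tiebreak (Pref.pad hsm τ) (A.map (Fin.castLEEmb hsm)) = Fin.castLE hsm (tiebreak τ A) := by
  obtain rfl | hA := A.eq_empty_or_nonempty
  · simp [tiebreak, Fin.ext_iff]
  · obtain ⟨hmem, hle⟩ := (tiebreak_eq_iff hA (τ := τ)).1 rfl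
    refine (tiebreak_eq_iff hA.map).2 ⟨mem_map_of_mem _ hmem, ?_⟩
    simpa [Pref.pad_castLE] using hle

end Pad

theorem kASP_black_of_le {s m n k : ℕ} [NeZero s] [NeZero m] (hsm : s ≤ m)
    (h : kASP m n (black m) k) : kASP s n (black s) k := by
  intro τ P i q
  have hpad := h (Pref.pad hsm τ) (P.pad hsm) i (Pref.pad hsm q)
  rw [addCopies_pad, update_pad, black_pad hsm (Nat.add_pos_left i.pos k), black_pad hsm i.pos,
    tiebreak_pad, tiebreak_pad] at hpad
  simpa [Profile.pad, Pref.pad_castLE] using hpad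

/-- The preference `a ≻ d ≻ b ≻ c` over the candidates `a, b, c, d = 0, 1, 2, 3`, used by the
first block of `cycleProfile`. The second vector lists the candidates from best to worst. -/
def Pref.adbc : Pref 4 := ⟨![0, 2, 3, 1], ![0, 3, 1, 2], by decide, by decide⟩

/-- The preference `c ≻ a ≻ d ≻ b`, encoded as in `Pref.adbc`; it is the vote of the second block of
`cycleProfile` and also the manipulation. -/
def Pref.cadb : Pref 4 := ⟨![1, 3, 0, 2], ![2, 0, 3, 1], by decide, by decide⟩

/-- The preference `b ≻ c ≻ a ≻ d` of the manipulator, encoded as in `Pref.adbc`. -/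
def Pref.bcad : Pref 4 := ⟨![2, 0, 1, 3], ![1, 2, 0, 3], by decide, by decide⟩

/-- The profile of `2 * h + 1` voters in which voter `0` has the preference `p` and the others form
two blocks of size `h`. With `p = Pref.bcad` the candidates `a, b, c` form a Condorcet cycle. -/
def cycleProfile (p : Pref 4) (h : ℕ) : Profile 4 (h + h + 1) :=
  Fin.cons p (Fin.append (fun _ : Fin h => Pref.adbc) fun _ : Fin h => Pref.cadb)

lemma sum_cycleProfile {M : Type*} [AddCommMonoid M] (f : Pref 4 → M) (p : Pref 4) (h : ℕ) :
    ∑ j, f (cycleProfile p h j) = f p + (h • f Pref.adbc + h • f Pref.cadb) := by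
  simp [Fin.sum_univ_succ, Fin.sum_univ_add, cycleProfile, -Fin.natAdd_eq_addNat]

lemma sum_addCopies_cycleProfile {M : Type*} [AddCommMonoid M] (f : Pref 4 → M) (p : Pref 4)
    (h k : ℕ) : ∑ j, f (addCopies (cycleProfile p h) 0 k j) =
      (k + 1) • f p + h • f Pref.adbc + h • f Pref.cadb := by
  rw [sum_addCopies, sum_cycleProfile, succ_nsmul]
  simp only [cycleProfile, Fin.cons_zero]
  abel

lemma update_cycleProfile (p q : Pref 4) (h : ℕ) :
    Function.update (cycleProfile p h) 0 q = cycleProfile q h :=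
  Fin.update_cons_zero ..

lemma black_cycleProfile_cadb (h : ℕ) : black 4 _ (cycleProfile Pref.cadb h) = {2} := by
  have hcard : #{j | cycleProfile Pref.cadb h j 2 = 0} = h + 1 := by
    rw [card_filter, sum_cycleProfile fun p => if p 2 = 0 then 1 else 0]
    simp [Pref.adbc, Pref.cadb, add_comm]
  exact majorityConsistent_black 4 _ _ _ (by omega)

lemma margin_addCopies_cycleProfile (h k : ℕ) (x y : Fin 4) :
    margin (addCopies (cycleProfile Pref.bcad h) 0 k) x y =
      (k + 1) * Int.sign ((Pref.bcad y : ℤ) - Pref.bcad x) +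
        h * Int.sign ((Pref.adbc y : ℤ) - Pref.adbc x) +
        h * Int.sign ((Pref.cadb y : ℤ) - Pref.cadb x) := by
  rw [margin_eq_sum_sign, sum_addCopies_cycleProfile fun p => Int.sign ((p y : ℤ) - p x)]
  simp only [nsmul_eq_mul, Nat.cast_succ]

lemma rankSum_addCopies_cycleProfile (h k : ℕ) (x : Fin 4) :
    rankSum (addCopies (cycleProfile Pref.bcad h) 0 k) x =
      (k + 1) * Pref.bcad x + h * Pref.adbc x + h * Pref.cadb x := by
  rw [rankSum, sum_addCopies_cycleProfile fun p => (p x : ℕ)]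
  simp only [smul_eq_mul]

lemma condorcetSet_addCopies_cycleProfile {h k : ℕ} (hk : k < 2 * h) :
    condorcetSet (addCopies (cycleProfile Pref.bcad h) 0 k) = ∅ := by
  set P := addCopies (cycleProfile Pref.bcad h) 0 k
  have hac : margin P 0 2 = (k + 1) * -1 + h * 1 + h * -1 := margin_addCopies_cycleProfile ..
  have hba : margin P 1 0 = (k + 1) * 1 + h * -1 + h * -1 := margin_addCopies_cycleProfile ..
  have hcb : margin P 2 1 = (k + 1) * -1 + h * -1 + h * 1 := margin_addCopies_cycleProfile ..
  have hda : margin P 3 0 = (k + 1) * -1 + h * -1 + h * -1 := margin_addCopies_cycleProfile ..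
  have hnot_winner (x : Fin 4) : ∃ y, y ≠ x ∧ margin P x y ≤ 0 := by
    match x with
    | 0 => exact ⟨2, by decide, by omega⟩
    | 1 => exact ⟨0, by decide, by omega⟩
    | 2 => exact ⟨1, by decide, by omega⟩
    | 3 => exact ⟨0, by decide, by omega⟩
  refine eq_empty_of_forall_notMem fun x hx => ?_
  obtain ⟨y, hyx, hle⟩ := hnot_winner x
  exact hle.not_gt (mem_condorcetSet.1 hx y hyx)

lemma zero_mem_borda_addCopies_cycleProfile {h k : ℕ} (hk : k < 2 * h) :
    0 ∈ borda 4 _ (addCopies (cycleProfile Pref.bcad h) 0 k) := by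
  set P := addCopies (cycleProfile Pref.bcad h) 0 k
  have ha : rankSum P 0 = (k + 1) * 2 + h * 0 + h * 1 := rankSum_addCopies_cycleProfile ..
  have hb : rankSum P 1 = (k + 1) * 0 + h * 2 + h * 3 := rankSum_addCopies_cycleProfile ..
  have hc : rankSum P 2 = (k + 1) * 1 + h * 3 + h * 0 := rankSum_addCopies_cycleProfile ..
  have hd : rankSum P 3 = (k + 1) * 3 + h * 1 + h * 2 := rankSum_addCopies_cycleProfile ..
  refine mem_borda.2 fun x => ?_
  match x with
  | 0 => exact le_rfl
  | 1 => omega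
  | 2 => omega
  | 3 => omega

theorem not_kASP_black_four {h k : ℕ} (hk : k < 2 * h) : ¬ kASP 4 (h + h + 1) (black 4) k := by
  intro hasp
  have htruthful : tiebreak (Equiv.refl _)
      (black 4 _ (addCopies (cycleProfile Pref.bcad h) 0 k)) = 0 := by
    rw [black, condorcetSet_addCopies_cycleProfile hk, if_neg Finset.not_nonempty_empty]
    have hmem := zero_mem_borda_addCopies_cycleProfile hk
    exact (tiebreak_eq_iff ⟨0, hmem⟩).2 ⟨hmem, fun d _ => Fin.zero_le d⟩
  have hworse := hasp (Equiv.refl _) (cycleProfile Pref.bcad h) 0 Pref.cadb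
  rw [htruthful, update_cycleProfile, black_cycleProfile_cadb, tiebreak_singleton] at hworse
  exact absurd hworse (show ¬ Pref.bcad 0 ≤ Pref.bcad 2 by decide)

theorem not_kASP_black {m n k : ℕ} [NeZero m] (hm : 4 ≤ m) (hodd : Odd n) (hk : k < n - 1) :
    ¬ kASP m n (black m) k := by
  obtain ⟨h, rfl⟩ := hodd
  rw [two_mul]
  exact fun hasp => not_kASP_black_four (by omega) (kASP_black_of_le hm hasp)

/-- For `m ≥ 4` and odd `n`: Black's Rule is not `k`-augmentation
strategyproof for any `0 ≤ k < n − 1`, and (being majority-consistent) its manipulation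
potential is exactly `n − 1`. -/
theorem black_manipPot_eq (m n : ℕ) [NeZero m] (hm : 4 ≤ m) (hn : 2 ≤ n) (hodd : Odd n) :
    (∀ k : ℕ, k < n - 1 → ¬ kASP m n (black m) k) ∧
      manipPot m n (black m) = ((n - 1 : ℕ) : ℕ∞) := by
  have hlt : ∀ k < n - 1, ¬ kASP m n (black m) k := fun _ => not_kASP_black hm hodd
  exact ⟨hlt, manipPot_eq_coe (fun _ => (majorityConsistent_black m).kASP) hlt⟩
end

section
/- The Maximin social choice correspondence is k-augmentation strategyproof for every k ≥ (m−2)n/(m−1) + 2; consequently its manipulation potential satisfies Φ(Maximin) ≤ (m−2)n/(m−1) + 2. -/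
open Finset

/-- Maximin score: the worst margin of `c` against any other candidate. -/
def maximinScore {m N : ℕ} (P : Profile m N) (c : Fin m) : ℤ :=
  if h : (Finset.univ.erase c).Nonempty then
    (Finset.univ.erase c).inf' h (fun d => margin P c d)
  else 0

/-- Maximin: the winners are the candidates with maximal maximin score. -/
def maximin (m : ℕ) : SCC m := fun _ P =>
  Finset.univ.filter (fun c => ∀ c', maximinScore P c' ≤ maximinScore P c)

/-!
Write `N(c, d)` for the number of voters preferring `c` to `d`. Choosing for every candidate `c` an
opponent `e c ≠ c` gives `n ≤ ∑ c, N(c, e c)`, since each voter is counted at her favourite.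

Suppose voter `i`, with favourite `t`, obtains `a` by voting `q` but only the worse `b` after adding
`k` copies of her true vote. Let `x = N(a, b)` in the original profile. Moving to the manipulated
profile cannot raise the support of `t` against anyone, nor that of `a` against `b`. As `a` wins
there, each candidate has an opponent against which its manipulated support is at most `x`. As `b`
wins in the augmented profile, `t` has an opponent `d` with `N(t, d) + k ≤ N(b, a) = n - x`, so in
particular `x ≤ n - k`. The counting bound for the manipulated profile, with `e t = d`, becomes
`n ≤ (n - x - k) + (m - 1) x`, that is, `k ≤ (m - 2) x ≤ (m - 2) (n - k)`, and hence
`(m - 1) k ≤ (m - 2) n`.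
-/

section TieBreaking

variable {m n k : ℕ} [NeZero m]

lemma tiebreak_mem (τ : Pref m) {A : Finset (Fin m)} (hA : A.Nonempty) : tiebreak τ A ∈ A := by
  obtain ⟨c, hc, hmin⟩ := mem_image.1 ((A.image fun c => τ c).min'_mem (hA.image _))
  rw [tiebreak, dif_pos hA, ← hmin, Equiv.symm_apply_apply]
  exact hc

lemma kASP_of_forall_mem {F : SCC m} (hF : ∀ N (P : Profile m N), (F N P).Nonempty)
    (h : ∀ (P : Profile m n) (i : Fin n) (q : Pref m), ∀ a ∈ F n (Function.update P i q),
      ∀ b ∈ F (n + k) (addCopies P i k), P i b ≤ P i a) :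
    kASP m n F k :=
  fun τ P i q => h P i q _ (tiebreak_mem τ (hF _ _)) _ (tiebreak_mem τ (hF _ _))

lemma manipPot_le {F : SCC m} (h : ∀ k', k ≤ k' → kASP m n F k') : manipPot m n F ≤ k :=
  sInf_le ⟨k, h, rfl⟩

end TieBreaking

section Support

variable {m n : ℕ}

/-- The pairwise support of `c` against `d`: the number of voters preferring `c` to `d`. For
`c ≠ d` it determines the margin, but being a natural number that is additive over voters it is
more convenient for counting. -/
def pairwiseSupport (P : Profile m n) (c d : Fin m) : ℕ :=
  #{j | P j c < P j d}

lemma pairwiseSupport_add_swap (P : Profile m n) {c d : Fin m} (hcd : c ≠ d) :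
    pairwiseSupport P c d + pairwiseSupport P d c = n := by
  have not_lt_iff (j : Fin n) : ¬ P j c < P j d ↔ P j d < P j c :=
    not_lt.trans ((P j).injective.ne hcd.symm).le_iff_lt
  simpa only [pairwiseSupport, not_lt_iff, card_univ, Fintype.card_fin] using
    card_filter_add_card_filter_not (s := univ) fun j => P j c < P j d

lemma margin_eq_two_mul_pairwiseSupport_sub (P : Profile m n) {c d : Fin m} (hcd : c ≠ d) :
    margin P c d = 2 * (pairwiseSupport P c d : ℤ) - n := by
  have hmargin : margin P c d = (pairwiseSupport P c d : ℤ) - pairwiseSupport P d c := rfl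
  have hadd := pairwiseSupport_add_swap P hcd
  lia

lemma pairwiseSupport_addCopies (P : Profile m n) (i : Fin n) (k : ℕ) (c d : Fin m) :
    pairwiseSupport (addCopies P i k) c d =
      pairwiseSupport P c d + if P i c < P i d then k else 0 := by
  simp only [pairwiseSupport, card_filter, Fin.sum_univ_add]
  simp [addCopies]

lemma pairwiseSupport_update_le (P : Profile m n) {i : Fin n} (q : Pref m) {c d : Fin m}
    (hcd : P i c < P i d) :
    pairwiseSupport (Function.update P i q) c d ≤ pairwiseSupport P c d := by
  refine card_le_card (monotone_filter_right _ fun j _ hj => ?_)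
  rcases eq_or_ne j i with rfl | hji
  · exact hcd
  · rwa [Function.update_of_ne hji] at hj

lemma apply_symm_zero_lt [NeZero m] (p : Pref m) {c : Fin m} (hc : p.symm 0 ≠ c) :
    p (p.symm 0) < p c := by
  rw [p.apply_symm_apply, Fin.pos_iff_ne_zero]
  exact fun h => hc (p.symm_apply_eq.2 h.symm)

lemma le_sum_pairwiseSupport [NeZero m] (P : Profile m n) {e : Fin m → Fin m}
    (he : ∀ c, c ≠ e c) : n ≤ ∑ c, pairwiseSupport P c (e c) := by
  have one_le_card (j : Fin n) : 1 ≤ #{c | P j c < P j (e c)} :=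
    card_pos.2 ⟨(P j).symm 0, by simpa only [mem_filter_univ] using apply_symm_zero_lt _ (he _)⟩
  calc
    n = ∑ _j : Fin n, 1 := by simp
    _ ≤ ∑ j, #{c | P j c < P j (e c)} := sum_le_sum fun j _ => one_le_card j
    _ = ∑ c, pairwiseSupport P c (e c) :=
      sum_card_bipartiteAbove_eq_sum_card_bipartiteBelow fun j c => P j c < P j (e c)

lemma le_pairwiseSupport_add_mul [NeZero m] (P : Profile m n) {x : ℕ}
    (hx : ∀ c, ∃ d, c ≠ d ∧ pairwiseSupport P c d ≤ x) {t d : Fin m} (htd : t ≠ d) :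
    n ≤ pairwiseSupport P t d + (m - 1) * x := by
  choose e hne hle using hx
  have hne' (c : Fin m) : c ≠ Function.update e t d c := by
    rcases eq_or_ne c t with rfl | hct
    · rwa [Function.update_self]
    · rw [Function.update_of_ne hct]
      exact hne c
  have hrest : ∑ c ∈ univ.erase t, pairwiseSupport P c (Function.update e t d c) ≤ (m - 1) * x := by
    have hcard : #(univ.erase t) = m - 1 := by simp
    rw [← hcard]
    refine sum_le_card_nsmul _ _ _ fun c hc => ?_
    rw [Function.update_of_ne (ne_of_mem_erase hc)]
    exact hle c
  calc
    n ≤ ∑ c, pairwiseSupport P c (Function.update e t d c) := le_sum_pairwiseSupport P hne'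
    _ = pairwiseSupport P t d +
        ∑ c ∈ univ.erase t, pairwiseSupport P c (Function.update e t d c) := by
      rw [← add_sum_erase _ _ (mem_univ t), Function.update_self]
    _ ≤ pairwiseSupport P t d + (m - 1) * x := by gcongr

end Support

section Maximin

variable {m n k : ℕ}

lemma maximinScore_le_margin (P : Profile m n) {c d : Fin m} (hcd : c ≠ d) :
    maximinScore P c ≤ margin P c d := by
  have hd : d ∈ univ.erase c := mem_erase.2 ⟨hcd.symm, mem_univ d⟩
  rw [maximinScore, dif_pos ⟨d, hd⟩]
  exact inf'_le _ hd

lemma exists_maximinScore_eq_margin [Nontrivial (Fin m)] (P : Profile m n) (c : Fin m) :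
    ∃ d, c ≠ d ∧ maximinScore P c = margin P c d := by
  have hne : (univ.erase c).Nonempty := univ_nontrivial.erase_nonempty
  obtain ⟨d, hd, heq⟩ := exists_mem_eq_inf' hne fun d => margin P c d
  exact ⟨d, (ne_of_mem_erase hd).symm, by rw [maximinScore, dif_pos hne, heq]⟩

lemma mem_maximin {P : Profile m n} {c : Fin m} :
    c ∈ maximin m n P ↔ ∀ c', maximinScore P c' ≤ maximinScore P c :=
  mem_filter_univ c

lemma maximin_nonempty [NeZero m] (P : Profile m n) : (maximin m n P).Nonempty := by
  obtain ⟨c, hc⟩ := Finite.exists_max (maximinScore P)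
  exact ⟨c, mem_maximin.2 hc⟩

lemma exists_pairwiseSupport_le_of_mem_maximin {P : Profile m n} {a b : Fin m}
    (ha : a ∈ maximin m n P) (hab : a ≠ b) (c : Fin m) :
    ∃ d, c ≠ d ∧ pairwiseSupport P c d ≤ pairwiseSupport P a b := by
  have : Nontrivial (Fin m) := ⟨a, b, hab⟩
  obtain ⟨d, hcd, hscore⟩ := exists_maximinScore_eq_margin P c
  have hmargin : margin P c d ≤ margin P a b :=
    calc
      margin P c d = maximinScore P c := hscore.symm
      _ ≤ maximinScore P a := mem_maximin.1 ha c
      _ ≤ margin P a b := maximinScore_le_margin P hab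
  rw [margin_eq_two_mul_pairwiseSupport_sub P hcd,
    margin_eq_two_mul_pairwiseSupport_sub P hab] at hmargin
  exact ⟨d, hcd, by lia⟩

lemma exists_pairwiseSupport_add_le_of_mem_maximin_addCopies [NeZero m] {P : Profile m n}
    {i : Fin n} {a b : Fin m} (hb : b ∈ maximin m (n + k) (addCopies P i k))
    (hab : P i a < P i b) :
    ∃ d, (P i).symm 0 ≠ d ∧
      pairwiseSupport P ((P i).symm 0) d + k ≤ pairwiseSupport P b a := by
  have hba : b ≠ a := fun h => hab.ne' (congrArg (P i) h)
  obtain ⟨d, htd, hle⟩ := exists_pairwiseSupport_le_of_mem_maximin hb hba ((P i).symm 0)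
  rw [pairwiseSupport_addCopies, if_pos (apply_symm_zero_lt _ htd),
    pairwiseSupport_addCopies, if_neg hab.not_gt] at hle
  exact ⟨d, htd, hle⟩

lemma apply_le_apply_of_mem_maximin_addCopies [NeZero m]
    (hk : ((m : ℤ) - 2) * n < ((m : ℤ) - 1) * k) {P : Profile m n} {i : Fin n} {q : Pref m}
    {a b : Fin m} (ha : a ∈ maximin m n (Function.update P i q))
    (hb : b ∈ maximin m (n + k) (addCopies P i k)) :
    P i b ≤ P i a := by
  by_contra! hlt
  have hab : a ≠ b := fun h => hlt.ne (congrArg (P i) h)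
  obtain ⟨d, htd, htop⟩ := exists_pairwiseSupport_add_le_of_mem_maximin_addCopies hb hlt
  have hswap := pairwiseSupport_add_swap P hab
  have hcount : n ≤ pairwiseSupport P ((P i).symm 0) d + (m - 1) * pairwiseSupport P a b :=
    calc
      n ≤ pairwiseSupport (Function.update P i q) ((P i).symm 0) d +
          (m - 1) * pairwiseSupport (Function.update P i q) a b :=
        le_pairwiseSupport_add_mul _ (exists_pairwiseSupport_le_of_mem_maximin ha hab) htd
      _ ≤ _ := by
        gcongr
        · exact pairwiseSupport_update_le P q (apply_symm_zero_lt _ htd)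
        · exact pairwiseSupport_update_le P q hlt
  have hm : 2 ≤ m := Fin.nontrivial_iff_two_le.1 ⟨a, b, hab⟩
  zify [show 1 ≤ m by lia] at hcount hswap htop hm
  have hk_le : (k : ℤ) ≤ (m - 2) * (n - k) :=
    calc
      (k : ℤ) ≤ (m - 2) * pairwiseSupport P a b := by linarith
      _ ≤ (m - 2) * (n - k) := mul_le_mul_of_nonneg_left (by linarith) (by linarith)
  linarith

theorem kASP_maximin [NeZero m] (hk : ((m : ℤ) - 2) * n < ((m : ℤ) - 1) * k) :
    kASP m n (maximin m) k :=
  kASP_of_forall_mem (fun _ => maximin_nonempty) fun _ _ _ _ ha _ hb =>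
    apply_le_apply_of_mem_maximin_addCopies hk ha hb

end Maximin

theorem maximin_kASP_of_le_general (m n : ℕ) [NeZero m] (hm : 2 ≤ m) :
    (∀ k : ℕ, ((m : ℝ) - 2) * (n : ℝ) / ((m : ℝ) - 1) < (k : ℝ) → kASP m n (maximin m) k) ∧
      manipPot m n (maximin m) ≤
        ((⌊((m : ℝ) - 2) * (n : ℝ) / ((m : ℝ) - 1) + 1⌋₊ : ℕ) : ℕ∞) := by
  have hm_pos : (0 : ℝ) < (m : ℝ) - 1 := sub_pos.2 (by exact_mod_cast hm)
  have hASP (k : ℕ) (hk : ((m : ℝ) - 2) * (n : ℝ) / ((m : ℝ) - 1) < (k : ℝ)) :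
      kASP m n (maximin m) k := by
    rw [div_lt_iff₀' hm_pos] at hk
    exact kASP_maximin (by exact_mod_cast hk)
  refine ⟨hASP, manipPot_le fun k hk => hASP k ?_⟩
  simpa using Nat.lt_of_floor_lt (Nat.lt_add_one_of_le hk)

/-- Maximin is `k`-augmentation strategyproof for every
`k ≥ (m−2)n/(m−1) + 2`; consequently `Φ(Maximin) ≤ (m−2)n/(m−1) + 2`. -/
theorem maximin_kASP_of_le (m n : ℕ) [NeZero m] (hm : 3 ≤ m) (hn : 2 ≤ n) :
    (∀ k : ℕ, ((m : ℝ) - 2) * (n : ℝ) / ((m : ℝ) - 1) + 2 ≤ (k : ℝ) →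
        kASP m n (maximin m) k) ∧
      manipPot m n (maximin m) ≤
        ((⌊((m : ℝ) - 2) * (n : ℝ) / ((m : ℝ) - 1) + 2⌋₊ : ℕ) : ℕ∞) := by
  obtain ⟨hASP, hpot⟩ := maximin_kASP_of_le_general m n (by lia)
  exact ⟨fun k hk => hASP k (by linarith), hpot.trans (by gcongr; norm_num)⟩
end

section
/- Let n be odd, and let f be any anonymous biranking-majority-consistent social choice function. Then the manipulation potential of f satisfies Φ(f) ≥ (n−1)/2. In particular, f is not ((n−1)/2 − 1)-augmentation strategyproof. -/
open Finset

/-- A social choice function: for each number `N` of voters, it maps each `N`-voter profile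
to a single winning candidate. -/
abbrev SCF (m : ℕ) := (N : ℕ) → Profile m N → Fin m

/-- `f` is `k`-augmentation strategyproof on `n`-voter profiles (SCF version). -/
def kASPf (m n : ℕ) (f : SCF m) (k : ℕ) : Prop :=
  ∀ (P : Profile m n) (i : Fin n) (q : Pref m),
    (P i) (f (n + k) (addCopies P i k)) ≤ (P i) (f n (Function.update P i q))

/-- The manipulation potential of the SCF `f` on `n`-voter profiles. -/
noncomputable def manipPotF (m n : ℕ) (f : SCF m) : ℕ∞ :=
  sInf ((fun k : ℕ => (k : ℕ∞)) '' {k : ℕ | ∀ k' : ℕ, k ≤ k' → kASPf m n f k'})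

/-! Let `x, y, z` form a Condorcet cycle, each ranking placing the top choice of the next one
second. If a lone `x`-voter among `k + 1` voters of each of `y` and `z` votes `y` instead, then
`y` has a majority among two rankings and wins its top choice. By `k`-augmentation
strategyproofness, `x` must like the outcome with `k` extra copies of `x` at least as much as
that. But those copies make every ranking occur `k + 1` times, a situation symmetric in
`x, y, z`, so by anonymity a single outcome has to please each of the three rankings as much as
the top choice of the next one: no candidate does. -/

theorem count_map_univ_eq_card_filter {ι α : Type*} [Fintype ι] [DecidableEq α] (P : ι → α)
    (a : α) : ((univ : Finset ι).val.map P).count a = #{i | P i = a} := by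
  simp only [Multiset.count_map, eq_comm (a := a), ← Finset.filter_val, Finset.card_val]

theorem exists_perm_comp_eq_of_map_univ_eq {ι α : Type*} [Fintype ι] {P Q : ι → α}
    (h : (univ : Finset ι).val.map P = (univ : Finset ι).val.map Q) :
    ∃ σ : Equiv.Perm ι, P ∘ σ = Q := by
  have := Classical.decEq α
  have card_fiber (c : α) : Fintype.card {i // Q i = c} = Fintype.card {i // P i = c} := by
    rw [Fintype.card_subtype, Fintype.card_subtype, ← count_map_univ_eq_card_filter,
      ← count_map_univ_eq_card_filter, h]
  let e (c : α) : {i // Q i = c} ≃ {i // P i = c} := Fintype.equivOfCardEq (card_fiber c)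
  exact ⟨Equiv.ofFiberEquiv e, funext (Equiv.ofFiberEquiv_map e)⟩

namespace Profile

variable {m n : ℕ}

/-- The ballots cast in a profile, as a multiset: the profile up to a renaming of the voters. -/
def ballots (P : Profile m n) : Multiset (Pref m) := univ.val.map P

theorem exists_ballots_eq {s : Multiset (Pref m)} (hs : s.card = n) :
    ∃ P : Profile m n, P.ballots = s := by
  subst hs
  induction s using Quotient.inductionOn with
  | h l => exact ⟨l.get, (Fin.univ_val_map l.get).trans (congrArg _ (List.ofFn_get l))⟩

theorem ballots_cons (x : Pref m) (P : Profile m n) :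
    ballots (Fin.cons x P : Profile m (n + 1)) = x ::ₘ P.ballots := by
  simp [ballots, List.ofFn_succ]

theorem ballots_append {k : ℕ} (P : Profile m n) (Q : Profile m k) :
    ballots (Fin.append P Q) = P.ballots + Q.ballots := by
  simp [ballots, List.ofFn_fin_append]

theorem ballots_const (x : Pref m) :
    ballots (fun _ : Fin n => x) = Multiset.replicate n x := by
  simp [ballots]

theorem ballots_addCopies (P : Profile m n) (i : Fin n) (k : ℕ) :
    (addCopies P i k).ballots = P.ballots + Multiset.replicate k (P i) := by
  have : addCopies P i k = Fin.append P (fun _ => P i) := by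
    funext j
    cases j using Fin.addCases <;> simp [addCopies]
  rw [this, ballots_append, ballots_const]

end Profile

namespace Pref

variable {m : ℕ} [NeZero m]

/-- The cyclic ranking `j ≻ j + 1 ≻ j + 2 ≻ ⋯` (addition modulo `m`), a rotation of the natural
order of the candidates. Three consecutive rotations form a Condorcet cycle. -/
def cyclic (j : Fin m) : Pref m := Equiv.subRight j

theorem cyclic_symm_zero (j : Fin m) : (cyclic j).symm 0 = j := zero_add j

theorem cyclic_injective : Function.Injective (cyclic : Fin m → Pref m) :=
  fun i j h => by rw [← cyclic_symm_zero i, h, cyclic_symm_zero]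

theorem val_cyclic_apply (j c : Fin m) :
    (cyclic j c : ℕ) = if j ≤ c then (c : ℕ) - j else m + c - j := by
  split_ifs with h
  · exact Fin.coe_sub_iff_le.2 h
  · exact Fin.coe_sub_iff_lt.2 (lt_of_not_ge h)

theorem exists_condorcet_cycle (hm : 3 ≤ m) :
    ∃ x y z : Pref m, x ≠ y ∧ y ≠ z ∧ z ≠ x ∧
      ∀ w, x (y.symm 0) < x w ∨ y (z.symm 0) < y w ∨ z (x.symm 0) < z w := by
  let a : Fin m := ⟨0, by omega⟩
  let b : Fin m := ⟨1, by omega⟩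
  let c : Fin m := ⟨2, by omega⟩
  have hab : a ≠ b := by simp [a, b]
  have hbc : b ≠ c := by simp [b, c]
  have hca : c ≠ a := by simp [c, a]
  refine ⟨cyclic a, cyclic b, cyclic c, cyclic_injective.ne hab, cyclic_injective.ne hbc,
    cyclic_injective.ne hca, fun w => ?_⟩
  simp only [cyclic_symm_zero, Fin.lt_def, val_cyclic_apply, Fin.le_def, a, b, c]
  -- `cyclic b` ranks candidate `0` last, `cyclic c` ranks `1` last, and `cyclic a` ranks
  -- all the others below `1`.
  rcases lt_trichotomy (w : ℕ) 1 with hw | hw | hw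
  · exact Or.inr (Or.inl (by grind))
  · exact Or.inr (Or.inr (by grind))
  · exact Or.inl (by grind)

end Pref

namespace SCF

open Multiset (replicate)

variable {m : ℕ}

/-- Anonymity: permuting the voters does not change the winner. -/
def Anonymous (f : SCF m) : Prop :=
  ∀ (N : ℕ) (σ : Equiv.Perm (Fin N)) (P : Profile m N), f N (fun i => P (σ i)) = f N P

/-- Biranking-majority consistency: when only the rankings `a` and `b` occur and `a` occurs
strictly more often, the top choice `a.symm 0` of `a` wins. -/
def BirankingMajorityConsistent [NeZero m] (f : SCF m) : Prop :=
  ∀ (N : ℕ) (P : Profile m N) (a b : Pref m), (∀ i, P i = a ∨ P i = b) →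
    #{i | P i = b} < #{i | P i = a} → f N P = a.symm 0

theorem Anonymous.eq_of_ballots_eq {f : SCF m} (hf : f.Anonymous) {N : ℕ} {P Q : Profile m N}
    (h : P.ballots = Q.ballots) : f N P = f N Q := by
  obtain ⟨σ, rfl⟩ := exists_perm_comp_eq_of_map_univ_eq h
  exact (hf N σ P).symm

theorem add_one_le_manipPotF_of_not_kASPf {n k : ℕ} {f : SCF m} (h : ¬ kASPf m n f k) :
    ((k + 1 : ℕ) : ℕ∞) ≤ manipPotF m n f := by
  refine le_sInf ?_
  rintro _ ⟨l, hl, rfl⟩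
  have hkl : k < l := lt_of_not_ge fun hlk => h (hl k hlk)
  exact Nat.cast_le.2 hkl

variable [NeZero m] {f : SCF m}

theorem BirankingMajorityConsistent.eq_of_ballots_eq (hf : f.BirankingMajorityConsistent)
    {N p q : ℕ} {P : Profile m N} {a b : Pref m} (hab : a ≠ b) (hqp : q < p)
    (hP : P.ballots = replicate p a + replicate q b) : f N P = a.symm 0 := by
  refine hf N P a b (fun i => ?_) ?_
  · have hi : P i ∈ P.ballots := Multiset.mem_map_of_mem P (mem_univ i)
    rw [hP, Multiset.mem_add] at hi
    exact hi.imp Multiset.eq_of_mem_replicate Multiset.eq_of_mem_replicate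
  · rw [← count_map_univ_eq_card_filter, ← count_map_univ_eq_card_filter]
    change P.ballots.count b < P.ballots.count a
    simpa [hP, Multiset.count_replicate, hab, hab.symm] using hqp

theorem rank_le_rank_top_of_kASPf (hanon : f.Anonymous) (hbir : f.BirankingMajorityConsistent)
    {p q k : ℕ} (hf : kASPf m (p + q + 1) f k) (hqp : q ≤ p) {x y z : Pref m} (hyz : y ≠ z)
    {Q : Profile m (p + q + 1 + k)}
    (hQ : Q.ballots = replicate (k + 1) x + replicate p y + replicate q z) :
    x (f _ Q) ≤ x (y.symm 0) := by
  obtain ⟨others, ballots_others⟩ : ∃ P : Profile m (p + q),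
      P.ballots = replicate p y + replicate q z := Profile.exists_ballots_eq (by simp)
  let P : Profile m (p + q + 1) := Fin.cons x others
  have honest : f _ (addCopies P 0 k) = f _ Q := by
    refine hanon.eq_of_ballots_eq ?_
    have hP : P 0 = x := rfl
    rw [Profile.ballots_addCopies, Profile.ballots_cons, ballots_others, hQ, hP,
      Multiset.replicate_succ, Multiset.cons_add, Multiset.cons_add, Multiset.cons_add,
      add_comm, add_assoc]
  have manipulated : f _ (Function.update P 0 y) = y.symm 0 := by
    refine hbir.eq_of_ballots_eq hyz (Nat.lt_succ_of_le hqp) ?_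
    rw [Fin.update_cons_zero, Profile.ballots_cons, ballots_others, Multiset.replicate_succ,
      Multiset.cons_add]
  have asp := hf P 0 y
  rwa [honest, manipulated] at asp

theorem not_kASPf_of_birankingMajorityConsistent (hm : 3 ≤ m) (hanon : f.Anonymous)
    (hbir : f.BirankingMajorityConsistent) (k : ℕ) :
    ¬ kASPf m (k + 1 + (k + 1) + 1) f k := by
  intro hf
  obtain ⟨x, y, z, hxy, hyz, hzx, hcycle⟩ := Pref.exists_condorcet_cycle hm
  let copies (a : Pref m) : Multiset (Pref m) := replicate (k + 1) a
  obtain ⟨Q, hQ⟩ : ∃ Q : Profile m (k + 1 + (k + 1) + 1 + k),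
      Q.ballots = copies x + copies y + copies z :=
    Profile.exists_ballots_eq (by simp [copies]; omega)
  have hx : x (f _ Q) ≤ x (y.symm 0) :=
    rank_le_rank_top_of_kASPf hanon hbir hf le_rfl hyz hQ
  have hy : y (f _ Q) ≤ y (z.symm 0) :=
    rank_le_rank_top_of_kASPf hanon hbir hf le_rfl hzx (hQ.trans (by rw [add_rotate]))
  have hz : z (f _ Q) ≤ z (x.symm 0) :=
    rank_le_rank_top_of_kASPf hanon hbir hf le_rfl hxy (hQ.trans (by rw [← add_rotate]))
  rcases hcycle (f _ Q) with h | h | h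
  exacts [h.not_ge hx, h.not_ge hy, h.not_ge hz]

end SCF

/-- For odd `n`, any anonymous biranking-majority-consistent social
choice function `f` has manipulation potential at least `(n−1)/2`; in particular `f` is
not `((n−1)/2 − 1)`-augmentation strategyproof. -/
theorem birankingMajority_scf_manipPot_ge (m n : ℕ) [NeZero m] (hm : 3 ≤ m) (hn : 2 ≤ n)
    (hodd : Odd n) (f : SCF m)
    -- anonymity: the output is invariant under permuting the voters
    (hanon : ∀ (N : ℕ) (σ : Equiv.Perm (Fin N)) (P : Profile m N),
      f N (fun i => P (σ i)) = f N P)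
    -- biranking-majority-consistency: on a profile with only two rankings, one strictly
    -- more frequent, the winner is the top choice of the more frequent ranking
    (hbir : ∀ (N : ℕ) (P : Profile m N) (a b : Pref m),
      (∀ i, P i = a ∨ P i = b) →
      (Finset.univ.filter (fun i => P i = b)).card <
        (Finset.univ.filter (fun i => P i = a)).card →
      f N P = a.symm 0) :
    (((n - 1) / 2 : ℕ) : ℕ∞) ≤ manipPotF m n f ∧ ¬ kASPf m n f ((n - 1) / 2 - 1) := by
  obtain ⟨t, rfl⟩ := hodd
  obtain ⟨k, rfl⟩ : ∃ k, t = k + 1 := Nat.exists_eq_add_of_le' (by omega)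
  have hk : (2 * (k + 1) + 1 - 1) / 2 = k + 1 := by omega
  rw [hk, Nat.add_sub_cancel, two_mul]
  have not_asp := SCF.not_kASPf_of_birankingMajorityConsistent hm hanon hbir k
  exact ⟨SCF.add_one_le_manipPotF_of_not_kASPf not_asp, not_asp⟩
end

section
/- For every integer k ≥ 0, the Pareto social choice correspondence is not k-augmentation strategyproof: there exist a profile, a voter i, a manipulation ≻'_i, and a tie-breaker τ such that Pareto_τ(≻'_i, ≻_{−i}) ≻_i Pareto_τ(≻ + k(≻_i)). Consequently the manipulation potential of the Pareto rule is ∞. -/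
open Finset

/-- Pareto rule: all candidates not Pareto dominated by another candidate. -/
def paretoRule (m : ℕ) : SCC m := fun _ P =>
  Finset.univ.filter (fun c => ¬ ∃ d : Fin m, ∀ i, P i d < P i c)

/-!
Adding copies of a preference already present does not change which candidates are Pareto
dominated, so for the Pareto rule `k`-augmentation strategyproofness is, for every `k`, just
strategyproofness of `Pareto_τ`. That fails: let voter `i` have `a ≻ c ≻ b ≻ ⋯`, everybody else
`b ≻ c ≻ a ≻ ⋯`, and let `τ` rank `c` first and `a` second. Truthfully `c` is Pareto optimal and
wins. If `i` reports `a ≻ b ≻ c ≻ ⋯` instead, then `b` dominates `c`, and `a` wins.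
-/

variable {m n N N' k : ℕ}

theorem tiebreak_eq_of_mem_of_forall_le [NeZero m] {τ : Pref m} {A : Finset (Fin m)} {c : Fin m}
    (hc : c ∈ A) (hle : ∀ d ∈ A, τ c ≤ τ d) : tiebreak τ A = c := by
  have hA : A.Nonempty := ⟨c, hc⟩
  rw [tiebreak, dif_pos hA, Equiv.symm_apply_eq, min'_eq_iff]
  exact ⟨mem_image_of_mem _ hc, forall_mem_image.2 hle⟩

/-- Candidate `d` Pareto dominates candidate `c` in `P`: every voter strictly prefers `d`. -/
def ParetoDominates (P : Profile m N) (d c : Fin m) : Prop :=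
  ∀ i, P i d < P i c

theorem mem_paretoRule {P : Profile m N} {c : Fin m} :
    c ∈ paretoRule m N P ↔ ∀ d, ¬ ParetoDominates P d c := by
  simp only [paretoRule, ParetoDominates, mem_filter_univ, not_exists]

theorem mem_paretoRule_of_forall_le {P : Profile m N} {c : Fin m} (i : Fin N)
    (hc : ∀ d, P i c ≤ P i d) : c ∈ paretoRule m N P :=
  mem_paretoRule.2 fun d hd => (hc d).not_gt (hd i)

theorem paretoRule_eq_of_range_eq {P : Profile m N} {P' : Profile m N'}
    (h : Set.range P = Set.range P') : paretoRule m N P = paretoRule m N' P' := by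
  ext c
  have dominates_iff (d : Fin m) : ParetoDominates P d c ↔ ParetoDominates P' d c := by
    unfold ParetoDominates
    rw [← Set.forall_mem_range (p := fun p : Pref m => p d < p c), h, Set.forall_mem_range]
  simp only [mem_paretoRule, dominates_iff]

theorem range_addCopies (P : Profile m n) (i : Fin n) (k : ℕ) :
    Set.range (addCopies P i k) = Set.range P := by
  apply Set.Subset.antisymm
  · rintro _ ⟨j, rfl⟩
    unfold addCopies
    split_ifs <;> exact Set.mem_range_self _
  · rintro _ ⟨j, rfl⟩
    exact ⟨j.castAdd k, dif_pos j.isLt⟩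

/-- Strategyproofness of `F` on `n`-voter profiles, under every tie-breaker: no voter strictly
gains by misreporting. -/
def IsStrategyproof (m n : ℕ) [NeZero m] (F : SCC m) : Prop :=
  ∀ (τ : Pref m) (P : Profile m n) (i : Fin n) (q : Pref m),
    P i (tiebreak τ (F n P)) ≤ P i (tiebreak τ (F n (Function.update P i q)))

theorem kASP_iff_isStrategyproof [NeZero m] {F : SCC m}
    (hF : ∀ (P : Profile m n) (i : Fin n), F (n + k) (addCopies P i k) = F n P) :
    kASP m n F k ↔ IsStrategyproof m n F := by
  simp only [kASP, IsStrategyproof, hF]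

theorem kASP_paretoRule_iff [NeZero m] :
    kASP m n (paretoRule m) k ↔ IsStrategyproof m n (paretoRule m) :=
  kASP_iff_isStrategyproof fun P i => paretoRule_eq_of_range_eq (range_addCopies P i k)

theorem paretoDominates_update_const [Nontrivial (Fin n)] {i : Fin n} {p r : Pref m}
    {d c : Fin m} :
    ParetoDominates (Function.update (fun _ => r) i p) d c ↔ p d < p c ∧ r d < r c := by
  obtain ⟨j, hj⟩ := exists_ne i
  rw [ParetoDominates, Function.forall_update_iff (p := fun _ (s : Pref m) => s d < s c)]
  exact and_congr_right fun _ => ⟨fun h => h j hj, fun h _ _ => h⟩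

theorem tiebreak_paretoRule_eq_of_paretoDominates [NeZero m] {P : Profile m N} {τ : Pref m}
    {a b c : Fin m} (ha : a ∈ paretoRule m N P) (hbc : ParetoDominates P b c)
    (hτ : ∀ d, τ d < τ a → d = c) : tiebreak τ (paretoRule m N P) = a := by
  refine tiebreak_eq_of_mem_of_forall_le ha fun d hd => ?_
  by_contra! hlt
  obtain rfl : d = c := hτ d hlt
  exact mem_paretoRule.1 hd b hbc

-- Voter `i` has true preference `p` and misreports `q`; everybody else has preference `r`.
theorem not_isStrategyproof_paretoRule_of_prefs [NeZero m] [Nontrivial (Fin n)]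
    {p q r τ : Pref m} {a b c : Fin m} (hac : p a < p c) (hpr : ∀ d, p d < p c → r c ≤ r d)
    (hqa : ∀ d, q a ≤ q d) (hqbc : q b < q c) (hrbc : r b < r c)
    (hτc : ∀ d, τ c ≤ τ d) (hτa : ∀ d, τ d < τ a → d = c) :
    ¬ IsStrategyproof m n (paretoRule m) := by
  intro hsp
  obtain ⟨i, -⟩ := exists_pair_ne (Fin n)
  let profile (s : Pref m) : Profile m n := Function.update (fun _ => r) i s
  have profile_self (s : Pref m) : profile s i = s := Function.update_self ..
  have c_mem : c ∈ paretoRule m n (profile p) := mem_paretoRule.2 fun d hd =>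
    have ⟨hp, hr⟩ := paretoDominates_update_const.1 hd
    (hpr d hp).not_gt hr
  have truthful_winner : tiebreak τ (paretoRule m n (profile p)) = c :=
    tiebreak_eq_of_mem_of_forall_le c_mem fun d _ => hτc d
  have a_mem : a ∈ paretoRule m n (profile q) :=
    mem_paretoRule_of_forall_le i (by simpa only [profile_self] using hqa)
  have misreport_winner : tiebreak τ (paretoRule m n (profile q)) = a :=
    tiebreak_paretoRule_eq_of_paretoDominates a_mem
      (paretoDominates_update_const.2 ⟨hqbc, hrbc⟩) hτa
  have hle := hsp τ (profile p) i q
  have update_profile : Function.update (profile p) i q = profile q := Function.update_idem ..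
  rw [update_profile, truthful_winner, misreport_winner, profile_self] at hle
  exact hle.not_gt hac

theorem not_isStrategyproof_paretoRule [NeZero m] (hm : 3 ≤ m) (hn : 2 ≤ n) :
    ¬ IsStrategyproof m n (paretoRule m) := by
  have : Nontrivial (Fin n) := Fin.nontrivial_iff_two_le.2 hn
  let a : Fin m := ⟨0, by omega⟩
  let c : Fin m := ⟨1, by omega⟩
  let b : Fin m := ⟨2, by omega⟩
  have hac : a < c := Nat.zero_lt_one
  have hcb : c < b := Nat.one_lt_two
  have a_le (d : Fin m) : a ≤ d := Nat.zero_le d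
  have eq_a_of_lt_c (d : Fin m) (hd : d < c) : d = a := Fin.ext (Nat.lt_one_iff.1 hd)
  let q : Pref m := Equiv.swap c b
  let r : Pref m := Equiv.swap a b
  let τ : Pref m := Equiv.swap a c
  have q_a : q a = a := Equiv.swap_apply_of_ne_of_ne hac.ne (hac.trans hcb).ne
  have q_b : q b = c := Equiv.swap_apply_right c b
  have q_c : q c = b := Equiv.swap_apply_left c b
  have r_a : r a = b := Equiv.swap_apply_left a b
  have r_b : r b = a := Equiv.swap_apply_right a b
  have r_c : r c = c := Equiv.swap_apply_of_ne_of_ne hac.ne' hcb.ne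
  have τ_a : τ a = c := Equiv.swap_apply_left a c
  have τ_c : τ c = a := Equiv.swap_apply_right a c
  refine not_isStrategyproof_paretoRule_of_prefs (p := 1) (q := q) (r := r) (τ := τ)
    (a := a) (b := b) (c := c) hac (fun d hd => ?_) (fun d => q_a ▸ a_le _)
    (by rwa [q_b, q_c]) (by rwa [r_b, r_c]) (fun d => τ_c ▸ a_le _) (fun d hd => ?_)
  · rw [eq_a_of_lt_c d hd, r_a, r_c]
    exact hcb.le
  · exact τ.injective ((eq_a_of_lt_c (τ d) (τ_a ▸ hd)).trans τ_c.symm)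

theorem manipPot_eq_top_iff [NeZero m] {F : SCC m} :
    manipPot m n F = ⊤ ↔ ∀ k, ∃ k' ≥ k, ¬ kASP m n F k' := by
  rw [manipPot, sInf_eq_top, Set.forall_mem_image]
  simp only [Set.mem_ofPred_eq, ENat.natCast_ne_top, imp_false, not_forall, exists_prop, ge_iff_le]

/-- For every `k ≥ 0`, the Pareto rule is not `k`-augmentation
strategyproof; consequently its manipulation potential is `∞`. -/
theorem pareto_manipPot_infinite (m n : ℕ) [NeZero m] (hm : 3 ≤ m) (hn : 2 ≤ n) :
    (∀ k : ℕ, ¬ kASP m n (paretoRule m) k) ∧ manipPot m n (paretoRule m) = ⊤ := by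
  have not_kASP (k : ℕ) : ¬ kASP m n (paretoRule m) k :=
    kASP_paretoRule_iff.not.2 (not_isStrategyproof_paretoRule hm hn)
  exact ⟨not_kASP, manipPot_eq_top_iff.2 fun k => ⟨k, le_rfl, not_kASP k⟩⟩
end
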